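/- Let A ∈ F{x,y} be irreducible and let (u, P₁, Q₁, P₂, Q₂) be a LINEAR differential rational parametrization of the differential curve (C,A) (each Pᵢ, Qᵢ of total degree at most 1) with mᵢ := max(ord Pᵢ, ord Qᵢ) ≥ 0 for i = 1, 2. Then the parametrization is proper if and only if m₁ = ord_y(A) and m₂ = ord_x(A). -/

import Mathlib

/-!
Let `x = η₁`, `y = η₂`. The orders of `A` are read off from transcendence degrees over `F`, phrased
as ranks in the algebraic matroid of `E / F`.

An element of `sat(A)` whose order in `x` does not exceed that of `A` is a multiple of `A`
(`dvd_of_mem_satSet`). As `sat(A)` is the ideal of relations between the derivatives of `x` and `y`,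
the statement `ord_x A ≥ m₂` says that `x_0, …, x_{m₂-1}, y_0, …, y_b` are algebraically independent
for all `b`, and an upper bound for both orders of `A` follows from a single relation of small
order.

Since the `u_k` are algebraically independent and the equations `x Q₁(u) = P₁(u)`,
`y Q₂(u) = P₂(u)` are linear of orders `m₁`, `m₂` in `u`, the field `F(y_0, …, y_b)` together with
`u_0, …, u_{m₂-1}` contains `u_0, …, u_{m₂+b}` (`u_mem_adjoin_prefix`). If `u ∈ F⟨x, y⟩`, comparing
transcendence degrees shows that `x` cannot have order less than `m₂` over `F⟨y⟩`
(`le_eRk_prefix`), nor, by symmetry, `y` order less than `m₁` over `F⟨x⟩`; while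
`x_0, …, x_{m₂}, y_0, …, y_{m₁}` are `m₁ + m₂ + 2` elements of `F(u_0, …, u_{m₁+m₂})`, hence
algebraically dependent. This gives the orders of `A`.

Conversely, if `ord_x A = m₂`, then `x_0, …, x_{m₂-1}, y_0, …, y_{m₁}` are algebraically independent
elements of `F(u_0, …, u_{m₁+m₂})`, so they form a transcendence basis of it and `u` is algebraic
over `K = F⟨x, y⟩` (`mem_closure_of_le_eRk`). Linearity upgrades this to `u ∈ K`
(`mem_of_isAlgebraic`): otherwise choose a `K`-linear functional `φ` on `E` with `φ 1 = 1`,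
`φ u = 0`, and put `π z = φ z + c (z - φ z)` for a natural number `c`. The equation for `x` and its
derivatives are linear in the `u_k` over `K`, so they still hold after replacing `u_k` by `π u_k`.
Hence, unless `Q₁` or `Q₂` vanishes there, the specialization `u_k ↦ π u_k` fixes `K` and sends `u`
to `c u`, so infinitely many multiples `c u` are roots of the minimal polynomial of `u` over `K`.
-/

open MvPolynomial

noncomputable section

namespace DiffCurve

variable (F : Type*) {E : Type*} [Field F] [Field E] [Algebra F E]

/-- `F⟨S⟩`: the intermediate field of `E/F` generated by all iterated derivatives of
elements of `S`. -/
def genDF (D : Derivation ℤ E E) (S : Set E) : IntermediateField F E :=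
  IntermediateField.adjoin F {x | ∃ s ∈ S, ∃ k : ℕ, (⇑D)^[k] s = x}

/-- `u` is differentially transcendental over `F`. -/
def DiffTrans (D : Derivation ℤ E E) (u : E) : Prop :=
  AlgebraicIndependent F (fun k : ℕ => (⇑D)^[k] u)

/-- Evaluation of `P ∈ F{u}` at `v`: the `F`-algebra map sending `u_k ↦ D^k v`. -/
def evalD (D : Derivation ℤ E E) (v : E) : MvPolynomial ℕ F →ₐ[F] E :=
  aeval fun k => (⇑D)^[k] v

/-- Evaluation of `A ∈ F{x,y}` at `(η₁, η₂)`: `x_k ↦ D^k η₁`, `y_k ↦ D^k η₂`. -/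
def evalD2 (D : Derivation ℤ E E) (η₁ η₂ : E) : MvPolynomial (Fin 2 × ℕ) F →ₐ[F] E :=
  aeval fun p => (⇑D)^[p.2] (if p.1 = 0 then η₁ else η₂)

variable {F}

/-- The order of `P ∈ F{u}`: the largest `k` such that `u_k` occurs (`⊥` if none). -/
def ordU (P : MvPolynomial ℕ F) : WithBot ℕ := P.vars.max

/-- `ord_x` (for `i = 0`) resp. `ord_y` (for `i = 1`) of `A ∈ F{x,y}`. -/
def ordIdx (i : Fin 2) (A : MvPolynomial (Fin 2 × ℕ) F) : WithBot ℕ :=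
  ((A.vars.filter fun v => v.1 = i).image Prod.snd).max

/-- `ord(A) = max(ord_x A, ord_y A)`. -/
def ordXY (A : MvPolynomial (Fin 2 × ℕ) F) : WithBot ℕ :=
  max (ordIdx 0 A) (ordIdx 1 A)

/-- The separant of `A` w.r.t. `x`: `∂A/∂x_s` where `s = ord_x A` (junk value `1` if
`ord_x A = ⊥`). -/
def sepX (A : MvPolynomial (Fin 2 × ℕ) F) : MvPolynomial (Fin 2 × ℕ) F :=
  WithBot.recBotCoe 1 (fun s => pderiv ((0 : Fin 2), s) A) (ordIdx 0 A)

/-- The differential ideal `[A]` generated by `A`, for a derivation `d`. -/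
def diffIdeal {R : Type*} [CommRing R] (d : Derivation ℤ R R) (A : R) : Ideal R :=
  Ideal.span (Set.range fun k : ℕ => (⇑d)^[k] A)

/-- The general component `sat(A) = [A] : S_A^∞` (as a set). -/
def satSet (dxy : Derivation ℤ (MvPolynomial (Fin 2 × ℕ) F) (MvPolynomial (Fin 2 × ℕ) F))
    (A : MvPolynomial (Fin 2 × ℕ) F) : Set (MvPolynomial (Fin 2 × ℕ) F) :=
  {f | ∃ m : ℕ, sepX A ^ m * f ∈ diffIdeal dxy A}

variable (F)

/-- `(u, P₁, Q₁, P₂, Q₂)` is a differential rational parametrization of the differential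
curve `(C, A)`. -/
def IsParam (D : Derivation ℤ E E)
    (dxy : Derivation ℤ (MvPolynomial (Fin 2 × ℕ) F) (MvPolynomial (Fin 2 × ℕ) F))
    (A : MvPolynomial (Fin 2 × ℕ) F) (u : E) (P₁ Q₁ P₂ Q₂ : MvPolynomial ℕ F) : Prop :=
  DiffTrans F D u ∧
  P₁ ≠ 0 ∧ Q₁ ≠ 0 ∧ IsRelPrime P₁ Q₁ ∧ P₂ ≠ 0 ∧ Q₂ ≠ 0 ∧ IsRelPrime P₂ Q₂ ∧
  ¬ (evalD F D u P₁ / evalD F D u Q₁ ∈ (algebraMap F E).range ∧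
     evalD F D u P₂ / evalD F D u Q₂ ∈ (algebraMap F E).range) ∧
  {B : MvPolynomial (Fin 2 × ℕ) F |
      evalD2 F D (evalD F D u P₁ / evalD F D u Q₁) (evalD F D u P₂ / evalD F D u Q₂) B = 0}
    = satSet dxy A

/-- A proper differential rational parametrization: additionally
`F⟨η₁, η₂⟩ = F⟨u⟩`. -/
def IsProperParam (D : Derivation ℤ E E)
    (dxy : Derivation ℤ (MvPolynomial (Fin 2 × ℕ) F) (MvPolynomial (Fin 2 × ℕ) F))
    (A : MvPolynomial (Fin 2 × ℕ) F) (u : E) (P₁ Q₁ P₂ Q₂ : MvPolynomial ℕ F) : Prop :=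
  IsParam F D dxy A u P₁ Q₁ P₂ Q₂ ∧
  genDF F D {evalD F D u P₁ / evalD F D u Q₁, evalD F D u P₂ / evalD F D u Q₂}
    = genDF F D {u}

/-- The projection `F{x,y,u} → F{x,y}` sending `u_k ↦ 0` and keeping `x_k`, `y_k`. -/
def projXY : MvPolynomial (Fin 3 × ℕ) F →ₐ[F] MvPolynomial (Fin 2 × ℕ) F :=
  aeval fun p => if h : (p.1 : ℕ) < 2 then X ((⟨p.1, h⟩ : Fin 2), p.2) else 0

/-- The `i`-th row polynomial of the differential resultant matrix:
`d^{m₂}f₁, …, f₁, d^{m₁}f₂, …, f₂` where `f₁ = x₀·Q₁ − P₁`, `f₂ = y₀·Q₂ − P₂`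
in `F{x,y,u}`. -/
def resRow (dxyu : Derivation ℤ (MvPolynomial (Fin 3 × ℕ) F) (MvPolynomial (Fin 3 × ℕ) F))
    (P₁ Q₁ P₂ Q₂ : MvPolynomial ℕ F) (m₁ m₂ : ℕ) (i : ℕ) : MvPolynomial (Fin 3 × ℕ) F :=
  if i ≤ m₂ then
    (⇑dxyu)^[m₂ - i] (X ((0 : Fin 3), 0) * rename (fun k => ((2 : Fin 3), k)) Q₁
      - rename (fun k => ((2 : Fin 3), k)) P₁)
  else
    (⇑dxyu)^[m₁ + m₂ + 1 - i] (X ((1 : Fin 3), 0) * rename (fun k => ((2 : Fin 3), k)) Q₂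
      - rename (fun k => ((2 : Fin 3), k)) P₂)

/-- The differential resultant `δ-Res(f₁, f₂) ∈ F{x,y}`: the determinant of the
`(m₁+m₂+2) × (m₁+m₂+2)` matrix whose rows are the coefficient vectors of
`d^{m₂}f₁, …, f₁, d^{m₁}f₂, …, f₂` w.r.t. `u_{m₁+m₂}, …, u_1, u_0, 1`. -/
def deltaRes (dxyu : Derivation ℤ (MvPolynomial (Fin 3 × ℕ) F) (MvPolynomial (Fin 3 × ℕ) F))
    (P₁ Q₁ P₂ Q₂ : MvPolynomial ℕ F) (m₁ m₂ : ℕ) : MvPolynomial (Fin 2 × ℕ) F :=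
  Matrix.det (Matrix.of fun i j : Fin (m₁ + m₂ + 2) =>
    if (j : ℕ) ≤ m₁ + m₂ then
      projXY F (pderiv ((2 : Fin 3), m₁ + m₂ - (j : ℕ)) (resRow F dxyu P₁ Q₁ P₂ Q₂ m₁ m₂ i))
    else projXY F (resRow F dxyu P₁ Q₁ P₂ Q₂ m₁ m₂ i))

/-- A linear homogeneous differential polynomial `L = Σ_k a_k u_k` in `F{u}`. -/
def IsLinHom {F : Type*} [Field F] (L : MvPolynomial ℕ F) : Prop :=
  ∀ m ∈ L.support, ∃ k : ℕ, m = Finsupp.single k 1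

section

/-! ### Algebraic closure and derivations -/

variable {F}
open AlgebraicIndependent
open scoped IntermediateField.algebraAdjoinAdjoin

lemma D_mem_of_mem_adjoin {δF : Derivation ℤ F F} {D : Derivation ℤ E E}
    (hD : ∀ a : F, D (algebraMap F E a) = algebraMap F E (δF a))
    {S : Set E} {K : IntermediateField F E} (hS : S ⊆ K) (hDS : ∀ s ∈ S, D s ∈ K) {x : E}
    (hx : x ∈ IntermediateField.adjoin F S) : D x ∈ K := by
  have hle : IntermediateField.adjoin F S ≤ K := IntermediateField.adjoin_le_iff.2 hS
  induction hx using IntermediateField.adjoin_induction with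
  | mem x hx => exact hDS x hx
  | algebraMap x => rw [hD]; exact K.algebraMap_mem _
  | add x y _ _ hx hy => rw [map_add]; exact K.add_mem hx hy
  | inv x hx' hx =>
    rw [Derivation.leibniz_inv, smul_eq_mul]
    exact K.mul_mem (K.neg_mem (pow_mem (K.inv_mem (hle hx')) 2)) hx
  | mul x y hx' hy' hx hy =>
    rw [Derivation.leibniz, smul_eq_mul, smul_eq_mul]
    exact K.add_mem (K.mul_mem (hle hx') hy) (K.mul_mem (hle hy') hx)

lemma mem_closure_iff {S : Set E} {x : E} :
    x ∈ (matroid F E).closure S ↔ IsAlgebraic (IntermediateField.adjoin F S) x := by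
  rw [matroid_closure_eq, SetLike.mem_coe, Subalgebra.mem_algebraicClosure]
  exact IsFractionRing.isAlgebraic_iff (Algebra.adjoin F S) (IntermediateField.adjoin F S) E

lemma adjoin_subset_closure (S : Set E) :
    (IntermediateField.adjoin F S : Set E) ⊆ (matroid F E).closure S := fun x hx =>
  mem_closure_iff.2 (isAlgebraic_algebraMap (⟨x, hx⟩ : IntermediateField.adjoin F S))

/-- In characteristic `0`, the derivative of an element algebraic over `F(S)` is algebraic over
`F(S, D S)`: differentiate its minimal polynomial. -/
lemma D_mem_closure [CharZero F] {δF : Derivation ℤ F F} {D : Derivation ℤ E E}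
    (hD : ∀ a : F, D (algebraMap F E a) = algebraMap F E (δF a)) {S T : Set E}
    (hST : S ⊆ (matroid F E).closure T) (hDS : ∀ s ∈ S, D s ∈ (matroid F E).closure T)
    {z : E} (hz : z ∈ (matroid F E).closure S) : D z ∈ (matroid F E).closure T := by
  set L : IntermediateField F E :=
    (algebraicClosure (IntermediateField.adjoin F T) E).restrictScalars F with hL
  have hLmem : ∀ x : E, x ∈ L ↔ x ∈ (matroid F E).closure T := fun x => by
    rw [mem_closure_iff, hL, IntermediateField.mem_restrictScalars, mem_algebraicClosure_iff]
  have hzL : z ∈ L :=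
    (hLmem z).2 ((matroid F E).closure_subset_closure_of_subset_closure hST hz)
  have hSL : S ⊆ L := fun s hs => (hLmem s).2 (hST hs)
  have hDSL : ∀ s ∈ S, D s ∈ L := fun s hs => (hLmem _).2 (hDS s hs)
  have hle : IntermediateField.adjoin F S ≤ L := IntermediateField.adjoin_le_iff.2 hSL
  rw [mem_closure_iff] at hz
  rw [← hLmem]
  have key : ∀ p : Polynomial (IntermediateField.adjoin F S),
      D (Polynomial.aeval z p) - Polynomial.aeval z (Polynomial.derivative p) * D z ∈ L := by
    intro p
    induction p using Polynomial.induction_on' with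
    | add p q hp hq =>
      have := L.add_mem hp hq
      simp only [map_add, add_mul]
      convert this using 1
      ring
    | monomial n a =>
      have : D (Polynomial.aeval z (Polynomial.monomial n a)) -
          Polynomial.aeval z (Polynomial.derivative (Polynomial.monomial n a)) * D z
          = z ^ n * D (a : E) := by
        rw [Polynomial.derivative_monomial, Polynomial.aeval_monomial, Polynomial.aeval_monomial,
          Derivation.leibniz, Derivation.leibniz_pow]
        simp only [smul_eq_mul, nsmul_eq_mul, map_mul, map_natCast,
          IntermediateField.algebraMap_apply]
        ring
      rw [this]
      exact L.mul_mem (pow_mem hzL n) (D_mem_of_mem_adjoin hD hSL hDSL a.2)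
  have haevalL : ∀ p : Polynomial (IntermediateField.adjoin F S), Polynomial.aeval z p ∈ L := by
    intro p
    rw [Polynomial.aeval_eq_sum_range]
    refine L.sum_mem fun i _ => ?_
    rw [Algebra.smul_def]
    exact L.mul_mem (hle (SetLike.coe_mem _)) (pow_mem hzL i)
  have hint : IsIntegral (IntermediateField.adjoin F S) z := hz.isIntegral
  have h0 := key (minpoly (IntermediateField.adjoin F S) z)
  rw [minpoly.aeval, map_zero, zero_sub] at h0
  have hne : Polynomial.aeval z (Polynomial.derivative (minpoly (IntermediateField.adjoin F S) z))
      ≠ 0 :=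
    (minpoly.irreducible hint).separable.aeval_derivative_ne_zero (minpoly.aeval _ _)
  have h1 := L.mul_mem (L.inv_mem (haevalL
    (Polynomial.derivative (minpoly (IntermediateField.adjoin F S) z)))) (L.neg_mem h0)
  rwa [neg_neg, inv_mul_cancel_left₀ hne] at h1


/-! ### Ranks of jets in the algebraic matroid -/

/-- The sequence `z, D z, D² z, …` of iterated derivatives of `z`. -/
def jet (D : Derivation ℤ E E) (z : E) : ℕ → E := fun k => (⇑D)^[k] z

lemma D_jet (D : Derivation ℤ E E) (z : E) (k : ℕ) : D (jet D z k) = jet D z (k + 1) :=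
  (Function.iterate_succ_apply' _ _ _).symm

lemma encard_image_Iio_le {α : Type*} (f : ℕ → α) (n : ℕ) : (f '' Set.Iio n).encard ≤ n := by
  refine (Set.encard_image_le _ _).trans ?_
  have : (Set.Iio n) = ((Finset.range n : Finset ℕ) : Set ℕ) := by ext; simp
  rw [this, Set.encard_coe_eq_coe_finsetCard, Finset.card_range]

lemma eRk_union_prefix_le (f g : ℕ → E) (a b : ℕ) :
    (matroid F E).eRk (f '' Set.Iio a ∪ g '' Set.Iio b) ≤ ((a + b : ℕ) : ℕ∞) := by
  refine ((matroid F E).eRk_le_encard _).trans ((Set.encard_union_le _ _).trans ?_)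
  push_cast
  exact add_le_add (encard_image_Iio_le f a) (encard_image_Iio_le g b)

lemma eRk_prefix {f : ℕ → E} (hf : AlgebraicIndependent F f) (n : ℕ) :
    (matroid F E).eRk (f '' Set.Iio n) = n := by
  have hi : (matroid F E).Indep (Set.range f) := hf.to_subtype_range
  rw [(hi.subset (Set.image_subset_range f _)).eRk_eq_encard,
    (hf.injective.injOn).encard_image]
  have : (Set.Iio n) = ((Finset.range n : Finset ℕ) : Set ℕ) := by ext; simp
  rw [this, Set.encard_coe_eq_coe_finsetCard, Finset.card_range]

lemma image_Iio_succ {α : Type*} (f : ℕ → α) (n : ℕ) :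
    f '' Set.Iio (n + 1) = insert (f n) (f '' Set.Iio n) := by
  rw [← Set.image_insert_eq]
  congr 1
  ext k
  simp only [Set.mem_Iio, Set.mem_insert_iff]
  omega

/-- An element algebraic over `F(S, y₀, y₁, …)` is algebraic over `F(S, y₀, …, y_{b-1})` for some
`b`. -/
lemma exists_mem_closure_prefix {S : Set E} {y : ℕ → E} {z : E}
    (hz : z ∈ (matroid F E).closure (S ∪ Set.range y)) :
    ∃ b, z ∈ (matroid F E).closure (S ∪ y '' Set.Iio b) := by
  obtain ⟨T, hT, hfin, -, hzT⟩ := Matroid.exists_mem_finite_closure_of_mem_closure hz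
  have : ∃ b, T ⊆ S ∪ y '' Set.Iio b := by
    clear hzT
    induction T, hfin using Set.Finite.induction_on with
    | empty => exact ⟨0, Set.empty_subset _⟩
    | insert _ _ ih =>
      obtain ⟨b, hb⟩ := ih ((Set.subset_insert _ _).trans hT)
      rcases hT (Set.mem_insert _ _) with h | ⟨k, hk⟩
      · exact ⟨b, Set.insert_subset (Or.inl h) hb⟩
      · refine ⟨max b (k + 1), Set.insert_subset (Or.inr ⟨k, by simp, hk⟩)
          (hb.trans (Set.union_subset_union_right _ (Set.image_mono ?_)))⟩
        exact Set.Iio_subset_Iio (le_max_left _ _)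
  obtain ⟨b, hb⟩ := this
  exact ⟨b, (matroid F E).closure_subset_closure hb hzT⟩

/-- If `x_j` is algebraic over the field generated by `x_0, …, x_{j-1}` and all the `y_k`, then so
are all further derivatives of `x`. -/
lemma jet_mem_closure [CharZero F] {δF : Derivation ℤ F F} {D : Derivation ℤ E E}
    (hD : ∀ a : F, D (algebraMap F E a) = algebraMap F E (δF a)) {x y : E} {j : ℕ}
    (hj : jet D x j ∈ (matroid F E).closure (jet D x '' Set.Iio j ∪ Set.range (jet D y)))
    (k : ℕ) : jet D x k ∈ (matroid F E).closure (jet D x '' Set.Iio j ∪ Set.range (jet D y)) := by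
  set S := jet D x '' Set.Iio j ∪ Set.range (jet D y) with hS
  have hsub : S ⊆ (matroid F E).closure S := (matroid F E).subset_closure S
  induction k with
  | zero =>
    rcases Nat.eq_zero_or_pos j with h | h
    · rwa [h] at hj
    · exact hsub (Or.inl ⟨0, h, rfl⟩)
  | succ k ih =>
    rw [← D_jet]
    refine D_mem_closure hD hsub ?_ ih
    rintro _ (⟨i, hi, rfl⟩ | ⟨i, rfl⟩)
    · rw [D_jet]
      rcases Nat.lt_or_ge (i + 1) j with h | h
      · exact hsub (Or.inl ⟨i + 1, h, rfl⟩)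
      · have : i + 1 = j := le_antisymm hi h
        rwa [this]
    · rw [D_jet]
      exact hsub (Or.inr ⟨i + 1, rfl⟩)

/-- If `u` has order at most `m` over `F⟨y⟩` (hypothesis `hU`) and its derivatives are algebraic
over `F⟨x, y⟩`, then `x` has order at least `m` over `F⟨y⟩`. -/
lemma le_eRk_prefix [CharZero F] {δF : Derivation ℤ F F} {D : Derivation ℤ E E}
    (hD : ∀ a : F, D (algebraMap F E a) = algebraMap F E (δF a)) {u x y : E} {m : ℕ}
    (hu : AlgebraicIndependent F (jet D u))
    (hU : ∀ b, jet D u '' Set.Iio (m + b) ⊆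
      (matroid F E).closure (jet D u '' Set.Iio m ∪ jet D y '' Set.Iio b))
    (hxy : Set.range (jet D u) ⊆
      (matroid F E).closure (Set.range (jet D x) ∪ Set.range (jet D y))) (b : ℕ) :
    ((m + b : ℕ) : ℕ∞) ≤ (matroid F E).eRk (jet D x '' Set.Iio m ∪ jet D y '' Set.Iio b) := by
  set M := matroid F E with hM
  -- If `x` had order `j < m` over `F⟨y⟩`, the `m + b` elements `u_0, …, u_{m+b-1}` would be
  -- algebraic over a field generated by `j + b` elements.
  have hnot : ∀ j < m, jet D x j ∉ M.closure (jet D x '' Set.Iio j ∪ Set.range (jet D y)) := by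
    intro j hjm hj
    have hall := jet_mem_closure hD hj
    have h1 : ∀ k, jet D u k ∈ M.closure (jet D x '' Set.Iio j ∪ Set.range (jet D y)) := by
      intro k
      refine M.closure_subset_closure_of_subset_closure ?_ (hxy ⟨k, rfl⟩)
      refine Set.union_subset ?_ (Set.subset_union_right.trans (M.subset_closure _))
      rintro _ ⟨i, rfl⟩
      exact hall i
    choose c hc using fun k => exists_mem_closure_prefix (h1 k)
    set b := (Finset.range m).sup c with hb
    have h2 : jet D u '' Set.Iio m ⊆ M.closure (jet D x '' Set.Iio j ∪ jet D y '' Set.Iio b) := by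
      rintro _ ⟨k, hk, rfl⟩
      refine M.closure_subset_closure (Set.union_subset_union_right _ (Set.image_mono ?_)) (hc k)
      exact Set.Iio_subset_Iio (Finset.le_sup (f := c) (Finset.mem_range.2 hk))
    have h3 : jet D u '' Set.Iio (m + b) ⊆
        M.closure (jet D x '' Set.Iio j ∪ jet D y '' Set.Iio b) :=
      (hU b).trans (M.closure_subset_closure_of_subset_closure
        (Set.union_subset h2 (Set.subset_union_right.trans (M.subset_closure _))))
    have h4 := M.eRk_mono h3
    rw [M.eRk_closure_eq, eRk_prefix hu] at h4
    have h5 := h4.trans (eRk_union_prefix_le _ _ _ _)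
    rw [Nat.cast_le] at h5
    omega
  -- For `a = 0` the rank bound comes from `hU`; each `x_a` with `a < m` raises the rank by one.
  have hind : ∀ a ≤ m, ((a + b : ℕ) : ℕ∞) ≤
      M.eRk (jet D x '' Set.Iio a ∪ jet D y '' Set.Iio b) := by
    intro a
    induction a with
    | zero =>
      intro _
      have h1 := M.eRk_mono (hU b)
      rw [M.eRk_closure_eq, eRk_prefix hu] at h1
      have h2 := h1.trans (M.eRk_union_le_encard_add_eRk _ _)
      have h3 := h2.trans (add_le_add_left (encard_image_Iio_le (jet D u) m) _)
      rw [Nat.cast_add] at h3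
      have h4 := (ENat.add_le_add_iff_left (ENat.natCast_ne_top m)).1 h3
      simpa using h4
    | succ a ih =>
      intro ha
      have h1 := ih (by omega)
      rw [image_Iio_succ, Set.insert_union, M.eRk_insert_eq_add_one ⟨Set.mem_univ _, fun h =>
        hnot a (by omega) (M.closure_subset_closure
          (Set.union_subset_union_right _ (Set.image_subset_range _ _)) h)⟩]
      have h2 := add_le_add_left h1 1
      refine le_trans (le_of_eq ?_) h2
      push_cast
      ring
  exact hind m le_rfl

/-- The converse: if `x` has order at least `m₂` over `F⟨y⟩`, where `x`, `y` have order at most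
`m₁`, `m₂` in `u`, then `u` is algebraic over `F⟨x, y⟩`. -/
lemma mem_closure_of_le_eRk {D : Derivation ℤ E E} {u x y : E} {m₁ m₂ : ℕ}
    (hu : AlgebraicIndependent F (jet D u))
    (hx : ∀ j, jet D x j ∈ (matroid F E).closure (jet D u '' Set.Iio (m₁ + 1 + j)))
    (hy : ∀ j, jet D y j ∈ (matroid F E).closure (jet D u '' Set.Iio (m₂ + 1 + j)))
    (h : ((m₂ + (m₁ + 1) : ℕ) : ℕ∞) ≤
      (matroid F E).eRk (jet D x '' Set.Iio m₂ ∪ jet D y '' Set.Iio (m₁ + 1))) :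
    u ∈ (matroid F E).closure (Set.range (jet D x) ∪ Set.range (jet D y)) := by
  set M := matroid F E with hM
  have hmono : ∀ a b, a ≤ b → M.closure (jet D u '' Set.Iio a) ⊆ M.closure (jet D u '' Set.Iio b) :=
    fun a b hab => M.closure_subset_closure (Set.image_mono (Set.Iio_subset_Iio hab))
  have hsub : jet D x '' Set.Iio m₂ ∪ jet D y '' Set.Iio (m₁ + 1) ⊆
      M.closure (jet D u '' Set.Iio (m₂ + (m₁ + 1))) := by
    rintro _ (⟨j, hj, rfl⟩ | ⟨j, hj, rfl⟩)
    · rw [Set.mem_Iio] at hj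
      exact hmono _ _ (by omega) (hx j)
    · rw [Set.mem_Iio] at hj
      exact hmono _ _ (by omega) (hy j)
  have hfin : M.IsRkFinite (jet D x '' Set.Iio m₂ ∪ jet D y '' Set.Iio (m₁ + 1)) :=
    M.isRkFinite_of_finite (((Set.finite_Iio _).image _).union ((Set.finite_Iio _).image _))
  have heq := hfin.closure_eq_closure_of_subset_of_eRk_ge_eRk hsub (by
    rw [M.eRk_closure_eq, eRk_prefix hu]; exact h)
  have hmem : u ∈ M.closure (M.closure (jet D u '' Set.Iio (m₂ + (m₁ + 1)))) := by
    rw [M.closure_closure]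
    exact M.subset_closure _ (Set.subset_univ _) ⟨0, by simp, rfl⟩
  rw [← heq] at hmem
  exact M.closure_subset_closure (Set.union_subset_union (Set.image_subset_range _ _)
    (Set.image_subset_range _ _)) hmem

/-! ### Orders and ranks -/

lemma algebraicIndependent_iff_eRk {ι : Type*} (g : ι → E) (s : Finset ι) :
    AlgebraicIndependent F (fun v : s => g v) ↔
      (s.card : ℕ∞) ≤ (matroid F E).eRk (g '' (s : Set ι)) := by
  have hrange : Set.range (fun v : s => g v) = g '' (s : Set ι) := by
    ext z; simp
  constructor
  · intro h
    have hi : (matroid F E).Indep (Set.range fun v : s => g v) := h.to_subtype_range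
    rw [← hrange, hi.eRk_eq_encard, ← Set.image_univ, h.injective.injOn.encard_image,
      Set.encard_univ]
    simp
  · intro h
    have hfin : (g '' (s : Set ι)).Finite := s.finite_toSet.image g
    have h1 := (matroid F E).eRk_le_encard (g '' (s : Set ι))
    have h2 : (g '' (s : Set ι)).encard ≤ s.card :=
      (Set.encard_image_le _ _).trans (Set.encard_coe_eq_coe_finsetCard s).le
    have hinj : Set.InjOn g (s : Set ι) := by
      refine s.finite_toSet.injOn_of_encard_image_eq ?_
      rw [Set.encard_coe_eq_coe_finsetCard]
      exact le_antisymm h2 (h.trans h1)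
    have hi : (matroid F E).Indep (g '' (s : Set ι)) :=
      (Matroid.indep_iff_eRk_eq_encard_of_finite hfin).2 (le_antisymm h1 (h2.trans h))
    rw [← hrange] at hi
    refine (algebraicIndependent_subtype_range ?_).1 hi
    intro v w hvw
    exact Subtype.ext (hinj v.2 w.2 hvw)

lemma algebraicIndependent_iff_vars {ι : Type*} (g : ι → E) (s : Finset ι) :
    AlgebraicIndependent F (fun v : s => g v) ↔
      ∀ B : MvPolynomial ι F, B.vars ⊆ s → aeval g B = 0 → B = 0 := by
  rw [algebraicIndependent_iff]
  have hcoe : (fun v : s => g v) = g ∘ ((↑) : s → ι) := rfl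
  constructor
  · intro h B hB h0
    obtain ⟨p, rfl⟩ := exists_rename_eq_of_vars_subset_range B ((↑) : s → ι)
      Subtype.val_injective (by rw [Subtype.range_coe]; exact Finset.coe_subset.2 hB)
    rw [aeval_rename, ← hcoe] at h0
    rw [h p h0, map_zero]
  · intro h p hp
    refine rename_injective _ Subtype.val_injective ?_
    rw [map_zero]
    refine h _ ?_ (by rw [aeval_rename]; exact hp)
    classical
    intro v hv
    obtain ⟨w, -, rfl⟩ := Finset.mem_image.1 (vars_rename _ p hv)
    exact w.2

/-- The variables `x_0, …, x_{a-1}, y_0, …, y_{b-1}`. -/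
def box (a b : ℕ) : Finset (Fin 2 × ℕ) :=
  ({0} ×ˢ Finset.range a) ∪ ({1} ×ˢ Finset.range b)

lemma mem_box {a b : ℕ} {v : Fin 2 × ℕ} :
    v ∈ box a b ↔ (v.1 = 0 ∧ v.2 < a) ∨ (v.1 = 1 ∧ v.2 < b) := by
  rcases v with ⟨i, j⟩
  simp only [box, Finset.mem_union, Finset.mem_product, Finset.mem_singleton, Finset.mem_range]

lemma card_box (a b : ℕ) : (box a b).card = a + b := by
  rw [box, Finset.card_union_of_disjoint]
  · simp
  · rw [Finset.disjoint_left]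
    rintro ⟨i, j⟩ h1 h2
    simp only [Finset.mem_product, Finset.mem_singleton] at h1 h2
    exact absurd (h1.1.symm.trans h2.1) (by decide)

/-- Algebraic independence of `x_0, …, x_{a-1}, y_0, …, y_{b-1}` at a point, as a rank
condition. -/
lemma eRk_box_iff (D : Derivation ℤ E E) (x y : E) (a b : ℕ) :
    (∀ B : MvPolynomial (Fin 2 × ℕ) F, B.vars ⊆ box a b → evalD2 F D x y B = 0 → B = 0) ↔
      ((a + b : ℕ) : ℕ∞) ≤ (matroid F E).eRk (jet D x '' Set.Iio a ∪ jet D y '' Set.Iio b) := by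
  have himg : (fun p : Fin 2 × ℕ => (⇑D)^[p.2] (if p.1 = 0 then x else y)) '' (box a b : Set _)
      = jet D x '' Set.Iio a ∪ jet D y '' Set.Iio b := by
    ext z
    simp only [Set.mem_image, Finset.mem_coe, mem_box, Set.mem_union, Set.mem_Iio, Prod.exists]
    constructor
    · rintro ⟨i, j, (⟨rfl, hj⟩ | ⟨rfl, hj⟩), rfl⟩
      · exact Or.inl ⟨j, hj, by simp [jet]⟩
      · exact Or.inr ⟨j, hj, by simp [jet]⟩
    · rintro (⟨j, hj, rfl⟩ | ⟨j, hj, rfl⟩)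
      · exact ⟨0, j, Or.inl ⟨rfl, hj⟩, by simp [jet]⟩
      · exact ⟨1, j, Or.inr ⟨rfl, hj⟩, by simp [jet]⟩
  rw [← himg, ← card_box, ← algebraicIndependent_iff_eRk]
  exact (algebraicIndependent_iff_vars
    (fun p : Fin 2 × ℕ => (⇑D)^[p.2] (if p.1 = 0 then x else y)) (box a b)).symm

lemma ordIdx_le_iff {i : Fin 2} {A : MvPolynomial (Fin 2 × ℕ) F} {n : ℕ} :
    ordIdx i A ≤ (n : WithBot ℕ) ↔ ∀ v ∈ A.vars, v.1 = i → v.2 ≤ n := by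
  simp only [ordIdx, Finset.max_le_iff, Finset.mem_image, Finset.mem_filter]
  constructor
  · intro h v hv hi
    exact WithBot.coe_le_coe.1 (h v.2 ⟨v, ⟨hv, hi⟩, rfl⟩)
  · rintro h _ ⟨v, ⟨hv, hi⟩, rfl⟩
    exact WithBot.coe_le_coe.2 (h v hv hi)

lemma ordIdx_lt_iff {i : Fin 2} {A : MvPolynomial (Fin 2 × ℕ) F} {n : ℕ} :
    ordIdx i A < (n : WithBot ℕ) ↔ ∀ v ∈ A.vars, v.1 = i → v.2 < n := by
  rw [ordIdx, Finset.max_eq_sup_withBot]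
  refine (Finset.sup_lt_iff (WithBot.bot_lt_coe n)).trans ?_
  simp only [Finset.mem_image, Finset.mem_filter]
  constructor
  · intro h v hv hi
    exact WithBot.coe_lt_coe.1 (h v.2 ⟨v, ⟨hv, hi⟩, rfl⟩)
  · rintro h _ ⟨v, ⟨hv, hi⟩, rfl⟩
    exact WithBot.coe_lt_coe.2 (h v hv hi)

lemma vars_subset_of_dvd {σ : Type*} {A B : MvPolynomial σ F} (hB : B ≠ 0) (h : A ∣ B) :
    A.vars ⊆ B.vars := by
  obtain ⟨q, rfl⟩ := h
  obtain ⟨hA, hq⟩ := mul_ne_zero_iff.1 hB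
  intro v hv
  rw [mem_vars_iff_degreeOf_ne_zero] at hv ⊢
  rw [degreeOf_mul_eq hA hq]
  omega

lemma ordIdx_le_of_dvd {i : Fin 2} {A B : MvPolynomial (Fin 2 × ℕ) F} (hB : B ≠ 0) (h : A ∣ B)
    {n : ℕ} (hn : ordIdx i B ≤ (n : WithBot ℕ)) : ordIdx i A ≤ (n : WithBot ℕ) :=
  ordIdx_le_iff.2 fun v hv => ordIdx_le_iff.1 hn v (vars_subset_of_dvd hB h hv)

/-! ### Reduction modulo the general component -/

/-- The variables of `F{x,y}` of order at most `n` in `x` (and arbitrary order in `y`). -/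
def xVars (n : ℕ) : Set (Fin 2 × ℕ) := {v | v.1 = 0 → v.2 ≤ n}

lemma xVars_mono {a b : ℕ} (h : a ≤ b) : xVars a ⊆ xVars b := fun _ hv h0 => (hv h0).trans h

section Reduction

variable {δF : Derivation ℤ F F}
  {dxy : Derivation ℤ (MvPolynomial (Fin 2 × ℕ) F) (MvPolynomial (Fin 2 × ℕ) F)}

/-- Differentiating a polynomial of order at most `n` in `x` produces `x_{n+1}` linearly, with
coefficient `∂f/∂x_n`. -/
lemma exists_dxy_eq (hdxyC : ∀ a : F, dxy (C a) = C (δF a))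
    (hdxyX : ∀ (i : Fin 2) (k : ℕ), dxy (X (i, k)) = X (i, k + 1)) {n : ℕ}
    {f : MvPolynomial (Fin 2 × ℕ) F} (hf : f ∈ supported F (xVars n)) :
    ∃ T ∈ supported F (xVars n), dxy f = pderiv ((0 : Fin 2), n) f * X (0, n + 1) + T := by
  induction hf using Algebra.adjoin_induction with
  | mem f hf =>
    obtain ⟨⟨i, j⟩, hv, rfl⟩ := hf
    by_cases h : ((i, j) : Fin 2 × ℕ) = (0, n)
    · obtain ⟨rfl, rfl⟩ := Prod.mk.inj h
      exact ⟨0, Subalgebra.zero_mem _, by rw [hdxyX, pderiv_X_self, one_mul, add_zero]⟩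
    · refine ⟨X (i, j + 1), X_mem_supported.2 fun hi => ?_, by
        rw [hdxyX, pderiv_X_of_ne h, zero_mul, zero_add]⟩
      simp only at hi
      subst hi
      have h1 : j ≤ n := hv rfl
      have h2 : j ≠ n := fun h' => h (by rw [h'])
      change j + 1 ≤ n
      omega
  | algebraMap c =>
    refine ⟨C (δF c), Subalgebra.algebraMap_mem _ _, ?_⟩
    rw [algebraMap_eq, hdxyC, pderiv_C, zero_mul, zero_add]
  | add f g hf hg ihf ihg =>
    obtain ⟨T, hT, hT'⟩ := ihf
    obtain ⟨T', hTT, hTT'⟩ := ihg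
    refine ⟨T + T', Subalgebra.add_mem _ hT hTT, ?_⟩
    rw [map_add, map_add, hT', hTT']
    ring
  | mul f g hf hg ihf ihg =>
    obtain ⟨T, hT, hT'⟩ := ihf
    obtain ⟨T', hTT, hTT'⟩ := ihg
    refine ⟨f * T' + g * T, Subalgebra.add_mem _ (Subalgebra.mul_mem _ hf hTT)
      (Subalgebra.mul_mem _ hg hT), ?_⟩
    rw [Derivation.leibniz, pderiv_mul, hT', hTT', smul_eq_mul, smul_eq_mul]
    ring

lemma pderiv_mem_supported {σ : Type*} {i : σ} {s : Set σ} {f : MvPolynomial σ F}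
    (hf : f ∈ supported F s) : pderiv i f ∈ supported F s := by
  classical
  induction hf using Algebra.adjoin_induction with
  | mem f hf =>
    obtain ⟨v, hv, rfl⟩ := hf
    rw [pderiv_X]
    by_cases h : v = i
    · subst h; simp
    · rw [Pi.single_eq_of_ne h]; exact Subalgebra.zero_mem _
  | algebraMap c => rw [algebraMap_eq, pderiv_C]; exact Subalgebra.zero_mem _
  | add f g hf hg ihf ihg => rw [map_add]; exact Subalgebra.add_mem _ ihf ihg
  | mul f g hf hg ihf ihg =>
    rw [pderiv_mul]
    exact Subalgebra.add_mem _ (Subalgebra.mul_mem _ ihf hg) (Subalgebra.mul_mem _ hf ihg)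

/-- The proper derivatives of `A` are linear in their leading variable, with the separant as
coefficient. -/
lemma exists_iterate_dxy_eq (hdxyC : ∀ a : F, dxy (C a) = C (δF a))
    (hdxyX : ∀ (i : Fin 2) (k : ℕ), dxy (X (i, k)) = X (i, k + 1)) {s : ℕ}
    {A : MvPolynomial (Fin 2 × ℕ) F} (hA : A ∈ supported F (xVars s)) (k : ℕ) :
    ∃ T ∈ supported F (xVars (s + k)),
      (⇑dxy)^[k + 1] A = pderiv ((0 : Fin 2), s) A * X (0, s + k + 1) + T := by
  induction k with
  | zero => exact exists_dxy_eq hdxyC hdxyX hA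
  | succ k ih =>
    obtain ⟨T, hT, hT'⟩ := ih
    have hS : pderiv ((0 : Fin 2), s) A ∈ supported F (xVars s) := pderiv_mem_supported hA
    obtain ⟨T₁, hT₁, hT₁'⟩ := exists_dxy_eq hdxyC hdxyX hS
    obtain ⟨T₂, hT₂, hT₂'⟩ := exists_dxy_eq hdxyC hdxyX hT
    have hX : ∀ j, j ≤ s + k + 1 → X ((0 : Fin 2), j) ∈ supported F (xVars (s + k + 1)) :=
      fun j hj => X_mem_supported.2 fun _ => hj
    have hup : ∀ j, j ≤ s + k + 1 → supported F (xVars j) ≤ supported F (xVars (s + k + 1)) :=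
      fun j hj => supported_mono (xVars_mono hj)
    refine ⟨dxy (pderiv ((0 : Fin 2), s) A) * X (0, s + k + 1) + dxy T, ?_, ?_⟩
    · refine Subalgebra.add_mem _ (Subalgebra.mul_mem _ ?_ (hX _ le_rfl)) ?_
      · rw [hT₁']
        exact Subalgebra.add_mem _ (Subalgebra.mul_mem _ (hup s (by omega)
          (pderiv_mem_supported hS)) (hX _ (by omega))) (hup s (by omega) hT₁)
      · rw [hT₂']
        exact Subalgebra.add_mem _ (Subalgebra.mul_mem _ (hup _ (by omega)
          (pderiv_mem_supported hT)) (hX _ (by omega))) (hup _ (by omega) hT₂)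
    · rw [Function.iterate_succ_apply', hT', map_add, Derivation.leibniz, hdxyX, smul_eq_mul,
        smul_eq_mul]
      rw [show s + (k + 1) + 1 = s + k + 1 + 1 from by omega]
      ring

lemma aeval_congr_supported {σ L : Type*} [CommRing L] [Algebra F L] {s : Set σ} {f g : σ → L}
    (h : ∀ v ∈ s, f v = g v) {p : MvPolynomial σ F} (hp : p ∈ supported F s) :
    aeval f p = aeval g p := by
  have : supported F s ≤ AlgHom.equalizer (aeval f) (aeval g) := by
    rw [supported_eq_adjoin_X, Algebra.adjoin_le_iff]
    rintro _ ⟨v, hv, rfl⟩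
    simpa using h v hv
  exact this hp

/-- An element of `[A]` vanishes wherever the first `N` derivatives of `A` do, for some `N`. -/
lemma exists_of_mem_diffIdeal {A x : MvPolynomial (Fin 2 × ℕ) F} (hx : x ∈ diffIdeal dxy A)
    (L : Type*) [CommRing L] [Algebra F L] :
    ∃ N : ℕ, ∀ f : Fin 2 × ℕ → L, (∀ k ≤ N, aeval f ((⇑dxy)^[k] A) = 0) → aeval f x = 0 := by
  induction hx using Submodule.span_induction with
  | mem x hx =>
    obtain ⟨k, rfl⟩ := hx
    exact ⟨k, fun f hf => hf k le_rfl⟩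
  | zero => exact ⟨0, fun f _ => map_zero _⟩
  | add x y _ _ hx hy =>
    obtain ⟨a, ha⟩ := hx
    obtain ⟨b, hb⟩ := hy
    refine ⟨max a b, fun f hf => ?_⟩
    rw [map_add, ha f fun k hk => hf k (hk.trans (le_max_left _ _)),
      hb f fun k hk => hf k (hk.trans (le_max_right _ _)), add_zero]
  | smul c x _ hx =>
    obtain ⟨a, ha⟩ := hx
    refine ⟨a, fun f hf => ?_⟩
    rw [smul_eq_mul, map_mul, ha f hf, mul_zero]

lemma totalDegree_pderiv_lt {σ : Type*} {i : σ} {A : MvPolynomial σ F}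
    (h : pderiv i A ≠ 0) : (pderiv i A).totalDegree < A.totalDegree := by
  classical
  obtain ⟨m, hm, hmax⟩ := (pderiv i A).support.exists_mem_eq_sup (support_nonempty.2 h)
    (fun s => s.sum fun _ e => e)
  have h1 : (pderiv i A).totalDegree = m.sum fun _ e => e := hmax
  have h2 : m + Finsupp.single i 1 ∈ A.support := by
    rw [mem_support_iff] at hm ⊢
    rw [coeff_pderiv] at hm
    exact left_ne_zero_of_mul hm
  have h3 := le_totalDegree h2
  rw [Finsupp.sum_add_index' (by simp) (by simp), Finsupp.sum_single_index rfl] at h3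
  omega

lemma pderiv_ne_zero [CharZero F] {σ : Type*} {i : σ} {A : MvPolynomial σ F} (h : i ∈ A.vars) :
    pderiv i A ≠ 0 := by
  classical
  obtain ⟨m, hm, hi⟩ := (mem_vars_iff_mem_support _).1 h
  intro h0
  have h1 := congrArg (coeff (m - Finsupp.single i 1)) h0
  have h2 : m - Finsupp.single i 1 + Finsupp.single i 1 = m :=
    tsub_add_cancel_of_le (by
      rw [Finsupp.single_le_iff]
      exact Nat.one_le_iff_ne_zero.2 (Finsupp.mem_support_iff.1 hi))
  rw [coeff_pderiv, h2, coeff_zero] at h1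
  rcases mul_eq_zero.1 h1 with h3 | h3
  · exact mem_support_iff.1 hm h3
  · exact Nat.cast_add_one_ne_zero _ h3

/-- Elements of `sat(A)` whose order in `x` does not exceed that of `A` are multiples of `A`. In
the fraction field of `F{x,y}/(A)` the separant is invertible, so the variables `x_{s+1}, x_{s+2}, …`
can successively be assigned values that annihilate all derivatives of `A`. -/
lemma dvd_of_mem_satSet [CharZero F] (hdxyC : ∀ a : F, dxy (C a) = C (δF a))
    (hdxyX : ∀ (i : Fin 2) (k : ℕ), dxy (X (i, k)) = X (i, k + 1)) {s : ℕ}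
    {A B : MvPolynomial (Fin 2 × ℕ) F} (hA : Irreducible A) (hs : ordIdx 0 A = (s : WithBot ℕ))
    (hB : B ∈ satSet dxy A) (hBs : ordIdx 0 B ≤ (s : WithBot ℕ)) : A ∣ B := by
  classical
  have hsup : ∀ {P : MvPolynomial (Fin 2 × ℕ) F}, ordIdx 0 P ≤ (s : WithBot ℕ) →
      P ∈ supported F (xVars s) := fun hP => mem_supported.2 fun v hv => ordIdx_le_iff.1 hP v hv
  have hAs := hsup hs.le
  have hmem : ((0 : Fin 2), s) ∈ A.vars := by
    by_contra hn
    have hlt : ordIdx 0 A < (s : WithBot ℕ) := ordIdx_lt_iff.2 fun v hv h0 =>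
      lt_of_le_of_ne (ordIdx_le_iff.1 hs.le v hv h0) fun h => hn (by
        rw [← h0, ← h]; exact hv)
    exact absurd hs hlt.ne
  have hsep : sepX A = pderiv ((0 : Fin 2), s) A := by rw [sepX, hs]; rfl
  set S := pderiv ((0 : Fin 2), s) A with hS
  have hS0 : S ≠ 0 := pderiv_ne_zero hmem
  -- The separant has smaller total degree than `A`.
  have hAS : ¬ A ∣ S := by
    rintro ⟨q, hq⟩
    have h1 : S.totalDegree < A.totalDegree := totalDegree_pderiv_lt hS0
    have hq0 : q ≠ 0 := by rintro rfl; exact hS0 (by rw [hq, mul_zero])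
    rw [hq, totalDegree_mul_of_isDomain hA.ne_zero hq0] at h1
    omega
  have hprime : (Ideal.span {A}).IsPrime :=
    (Ideal.span_singleton_prime hA.ne_zero).2 hA.prime
  let L := FractionRing (MvPolynomial (Fin 2 × ℕ) F ⧸ Ideal.span {A})
  let π : MvPolynomial (Fin 2 × ℕ) F →ₐ[F] L :=
    (IsScalarTower.toAlgHom F (MvPolynomial (Fin 2 × ℕ) F ⧸ Ideal.span {A}) L).comp
      (Ideal.Quotient.mkₐ F (Ideal.span {A}))
  have hπ : ∀ P, π P = 0 ↔ A ∣ P := fun P => by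
    change algebraMap (MvPolynomial (Fin 2 × ℕ) F ⧸ Ideal.span {A}) L
      (Ideal.Quotient.mk (Ideal.span {A}) P) = 0 ↔ _
    rw [FaithfulSMul.algebraMap_eq_zero_iff, Ideal.Quotient.eq_zero_iff_mem,
      Ideal.mem_span_singleton]
  have hπX : aeval (fun v => π (X v)) = π := (aeval_unique π).symm
  -- Assigning the value `-T / S` to `x_{s+n+1}` makes `d^{n+1} A = S x_{s+n+1} + T` vanish.
  have key : ∀ n, ∃ f : Fin 2 × ℕ → L, (∀ v ∈ xVars s, f v = π (X v)) ∧
      ∀ k ≤ n, aeval f ((⇑dxy)^[k] A) = 0 := by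
    intro n
    induction n with
    | zero =>
      refine ⟨fun v => π (X v), fun _ _ => rfl, fun k hk => ?_⟩
      obtain rfl : k = 0 := by omega
      rw [hπX, Function.iterate_zero_apply, hπ]
    | succ n ih =>
      obtain ⟨f, hf, hfk⟩ := ih
      obtain ⟨T, hT, hT'⟩ := exists_iterate_dxy_eq hdxyC hdxyX hAs n
      set f' := Function.update f (0, s + n + 1) (-(aeval f T) / π S) with hf'
      have hagree : ∀ v ∈ xVars (s + n), f' v = f v := fun v hv =>
        Function.update_of_ne (by
          rintro rfl
          have : s + n + 1 ≤ s + n := hv rfl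
          omega) _ _
      have hf's : ∀ v ∈ xVars s, f' v = π (X v) := fun v hv =>
        (hagree v (xVars_mono (by omega) hv)).trans (hf v hv)
      refine ⟨f', hf's, fun k hk => ?_⟩
      rcases Nat.lt_or_ge k (n + 1) with h | h
      · rw [← hfk k (by omega)]
        refine aeval_congr_supported hagree ?_
        cases k with
        | zero => exact supported_mono (xVars_mono (by omega)) hAs
        | succ k =>
          obtain ⟨T₁, hT₁, hT₁'⟩ := exists_iterate_dxy_eq hdxyC hdxyX hAs k
          rw [hT₁']
          refine Subalgebra.add_mem _ (Subalgebra.mul_mem _ ?_ ?_) ?_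
          · exact supported_mono (xVars_mono (by omega)) (pderiv_mem_supported hAs)
          · refine X_mem_supported.2 fun _ => ?_
            change s + k + 1 ≤ s + n
            omega
          · exact supported_mono (xVars_mono (by omega)) hT₁
      · obtain rfl : k = n + 1 := by omega
        have h1 : aeval f' S = π S := by
          rw [aeval_congr_supported hf's (pderiv_mem_supported hAs), hπX]
        have h2 : aeval f' T = aeval f T := aeval_congr_supported hagree hT
        have h3 : π S ≠ 0 := fun h => hAS ((hπ S).1 h)
        rw [hT', map_add, map_mul, h1, h2, aeval_X, hf', Function.update_self,
          mul_div_cancel₀ _ h3, neg_add_cancel]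
  obtain ⟨m, hm⟩ := hB
  rw [hsep] at hm
  obtain ⟨N, hN⟩ := exists_of_mem_diffIdeal hm L
  obtain ⟨f, hf, hfN⟩ := key N
  have h0 := hN f hfN
  have hSsup : S ^ m * B ∈ supported F (xVars s) :=
    Subalgebra.mul_mem _ (Subalgebra.pow_mem _ (pderiv_mem_supported hAs) _) (hsup hBs)
  rw [aeval_congr_supported hf hSsup, hπX, hπ] at h0
  rcases hA.prime.dvd_or_dvd h0 with h | h
  · exact absurd (hA.prime.dvd_of_dvd_pow h) hAS
  · exact h

end Reduction

/-! ### Linear quotients -/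

lemma eq_single_of_mem_support {P : MvPolynomial ℕ F} (hP : P.totalDegree ≤ 1) {d : ℕ →₀ ℕ}
    (hd : d ∈ P.support) {v : ℕ} (hv : v ∈ d.support) : d = Finsupp.single v 1 := by
  have h1 : (d.sum fun _ e => e) ≤ 1 := (le_totalDegree hd).trans hP
  have hle : Finsupp.single v 1 ≤ d := by
    rw [Finsupp.single_le_iff]
    exact Nat.one_le_iff_ne_zero.2 (Finsupp.mem_support_iff.1 hv)
  obtain ⟨e, rfl⟩ := exists_add_of_le hle
  rw [Finsupp.sum_add_index' (by simp) (by simp), Finsupp.sum_single_index rfl] at h1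
  have h2 : e.degree = 0 := by
    have : e.degree = e.sum fun _ e => e := rfl
    omega
  rw [(Finsupp.degree_eq_zero_iff e).1 h2, add_zero]

lemma ordU_le_iff {P : MvPolynomial ℕ F} {n : ℕ} :
    ordU P ≤ (n : WithBot ℕ) ↔ ∀ v ∈ P.vars, v ≤ n := by
  simp only [ordU, Finset.max_le_iff]
  exact forall₂_congr fun _ _ => WithBot.coe_le_coe

lemma coeff_ne_zero_of_mem_vars {P : MvPolynomial ℕ F} (hP : P.totalDegree ≤ 1) {m : ℕ}
    (h : m ∈ P.vars) : coeff (Finsupp.single m 1) P ≠ 0 := by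
  obtain ⟨d, hd, hm⟩ := (mem_vars_iff_mem_support _).1 h
  rw [← eq_single_of_mem_support hP hd hm]
  exact mem_support_iff.1 hd

lemma aeval_mem_of_vars {σ : Type*} {f : σ → E} {P : MvPolynomial σ F}
    {K : IntermediateField F E} (h : ∀ v ∈ P.vars, f v ∈ K) : aeval f P ∈ K := by
  have hle : supported F (P.vars : Set σ) ≤ K.toSubalgebra.comap (aeval f) := by
    rw [supported_eq_adjoin_X, Algebra.adjoin_le_iff]
    rintro _ ⟨v, hv, rfl⟩
    simpa using h v hv
  exact hle (mem_supported_vars P)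

/-- A linear `P` of order at most `m`, evaluated at `u`, is `p · u_m` plus an element of
`F(u_0, …, u_{m-1})`, where `p` is the coefficient of `u_m`. -/
lemma evalD_sub_mem (D : Derivation ℤ E E) (u : E) {P : MvPolynomial ℕ F}
    (hP : P.totalDegree ≤ 1) {m : ℕ} (hm : ordU P ≤ (m : WithBot ℕ)) :
    evalD F D u P - algebraMap F E (coeff (Finsupp.single m 1) P) * jet D u m ∈
      IntermediateField.adjoin F (jet D u '' Set.Iio m) := by
  classical
  have h1 : evalD F D u P - algebraMap F E (coeff (Finsupp.single m 1) P) * jet D u m =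
      aeval (jet D u) (P - monomial (Finsupp.single m 1) (coeff (Finsupp.single m 1) P)) := by
    rw [map_sub, aeval_monomial, Finsupp.prod_single_index (by simp), pow_one]
    rfl
  rw [h1]
  refine aeval_mem_of_vars fun v hv => ?_
  refine IntermediateField.subset_adjoin _ _ ⟨v, ?_, rfl⟩
  obtain ⟨d, hd, hvd⟩ := (mem_vars_iff_mem_support _).1 hv
  rw [mem_support_iff, coeff_sub, coeff_monomial] at hd
  have hne : Finsupp.single m 1 ≠ d := by
    rintro rfl
    simp at hd
  rw [if_neg hne, sub_zero] at hd
  have hdP : d ∈ P.support := mem_support_iff.2 hd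
  have hd1 := eq_single_of_mem_support hP hdP hvd
  have hvP : v ∈ P.vars := (mem_vars_iff_mem_support _).2 ⟨d, hdP, hvd⟩
  have hvm : v ≤ m := ordU_le_iff.1 hm v hvP
  exact lt_of_le_of_ne hvm fun h => hne (by rw [hd1, h])

lemma evalD_injective {D : Derivation ℤ E E} {u : E} (hu : DiffTrans F D u) :
    Function.Injective (evalD F D u) := hu

/-- A quotient of coprime differential polynomials, not both constant, is not constant. -/
lemma div_notMem_range {D : Derivation ℤ E E} {u : E} (hu : DiffTrans F D u)
    {P Q : MvPolynomial ℕ F} (hQ : Q ≠ 0) (hPQ : IsRelPrime P Q) {m : ℕ}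
    (hm : max (ordU P) (ordU Q) = (m : WithBot ℕ)) :
    evalD F D u P / evalD F D u Q ∉ (algebraMap F E).range := by
  rintro ⟨c, hc⟩
  have hQ0 : evalD F D u Q ≠ 0 := fun h => hQ (evalD_injective hu (by rw [h, map_zero]))
  have h1 : P = C c * Q := by
    apply evalD_injective hu
    rw [map_mul, ← algebraMap_eq, AlgHom.commutes, hc, div_mul_cancel₀ _ hQ0]
  have hunit : IsUnit Q := hPQ (h1 ▸ Dvd.intro_left _ rfl) dvd_rfl
  obtain ⟨q, hq⟩ := MvPolynomial.isUnit_iff_eq_C_of_isReduced.1 hunit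
  have h2 : Q = C q := hq.2
  rw [h1, h2, ← C_mul, ordU, ordU, vars_C, vars_C] at hm
  simp at hm

section OneComponent

variable {δF : Derivation ℤ F F} {D : Derivation ℤ E E}

lemma jet_mem_adjoin_prefix (hD : ∀ a : F, D (algebraMap F E a) = algebraMap F E (δF a)) {u : E}
    {P Q : MvPolynomial ℕ F} {m : ℕ} (hm : max (ordU P) (ordU Q) = (m : WithBot ℕ)) (j : ℕ) :
    jet D (evalD F D u P / evalD F D u Q) j ∈
      IntermediateField.adjoin F (jet D u '' Set.Iio (m + 1 + j)) := by
  induction j with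
  | zero =>
    refine IntermediateField.div_mem _ ?_ ?_
    · refine aeval_mem_of_vars fun v hv => IntermediateField.subset_adjoin _ _ ⟨v, ?_, rfl⟩
      exact Nat.lt_succ_of_le (ordU_le_iff.1 ((le_max_left _ _).trans hm.le) v hv)
    · refine aeval_mem_of_vars fun v hv => IntermediateField.subset_adjoin _ _ ⟨v, ?_, rfl⟩
      exact Nat.lt_succ_of_le (ordU_le_iff.1 ((le_max_right _ _).trans hm.le) v hv)
  | succ j ih =>
    rw [← D_jet]
    refine D_mem_of_mem_adjoin hD ?_ ?_ ih
    · exact (Set.image_mono (Set.Iio_subset_Iio (by omega))).trans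
        (IntermediateField.subset_adjoin F _)
    · rintro _ ⟨i, hi, rfl⟩
      rw [D_jet]
      refine IntermediateField.subset_adjoin _ _ ⟨i + 1, ?_, rfl⟩
      rw [Set.mem_Iio] at hi ⊢
      omega

/-- The linear equation `y Q(u) = P(u)` of order `m` expresses `u_m` through `y` and
`u_0, …, u_{m-1}`; differentiating it expresses `u_{m+k}` through these and `y_0, …, y_k`. -/
lemma u_mem_adjoin_prefix (hD : ∀ a : F, D (algebraMap F E a) = algebraMap F E (δF a)) {u : E}
    (hu : DiffTrans F D u) {P Q : MvPolynomial ℕ F} (hdP : P.totalDegree ≤ 1)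
    (hdQ : Q.totalDegree ≤ 1) (hQ : Q ≠ 0) (hPQ : IsRelPrime P Q) {m : ℕ}
    (hm : max (ordU P) (ordU Q) = (m : WithBot ℕ)) (b : ℕ) :
    jet D u '' Set.Iio (m + b) ⊆ IntermediateField.adjoin F
      (jet D u '' Set.Iio m ∪ jet D (evalD F D u P / evalD F D u Q) '' Set.Iio b) := by
  set y := evalD F D u P / evalD F D u Q with hy
  set H : ℕ → IntermediateField F E := fun b =>
    IntermediateField.adjoin F (jet D u '' Set.Iio m ∪ jet D y '' Set.Iio b) with hH
  have hHmono : ∀ {a b}, a ≤ b → H a ≤ H b := fun hab =>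
    IntermediateField.adjoin.mono _ _ _
      (Set.union_subset_union_right _ (Set.image_mono (Set.Iio_subset_Iio hab)))
  have hHu : ∀ b, ∀ i < m, jet D u i ∈ H b := fun b i hi =>
    IntermediateField.subset_adjoin _ _ (Or.inl ⟨i, hi, rfl⟩)
  have hHy : ∀ b, ∀ i < b, jet D y i ∈ H b := fun b i hi =>
    IntermediateField.subset_adjoin _ _ (Or.inr ⟨i, hi, rfl⟩)
  have hQ0 : evalD F D u Q ≠ 0 := fun h => hQ (evalD_injective hu (by rw [h, map_zero]))
  have hyF : y ∉ (algebraMap F E).range := div_notMem_range hu hQ hPQ hm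
  have hmP : ordU P ≤ (m : WithBot ℕ) := (le_max_left _ _).trans hm.le
  have hmQ : ordU Q ≤ (m : WithBot ℕ) := (le_max_right _ _).trans hm.le
  set p := coeff (Finsupp.single m 1) P with hp
  set q := coeff (Finsupp.single m 1) Q with hq
  have hpq : p ≠ 0 ∨ q ≠ 0 := by
    have hcase : ordU P = (m : WithBot ℕ) ∨ ordU Q = (m : WithBot ℕ) := by
      rcases max_choice (ordU P) (ordU Q) with h | h
      · exact Or.inl (h ▸ hm)
      · exact Or.inr (h ▸ hm)
    rcases hcase with h | h
    · exact Or.inl (coeff_ne_zero_of_mem_vars hdP (Finset.mem_of_max h))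
    · exact Or.inr (coeff_ne_zero_of_mem_vars hdQ (Finset.mem_of_max h))
  -- The coefficient of `u_m` in the relation `y Q(u) = P(u)`.
  have he : y * algebraMap F E q - algebraMap F E p ≠ 0 := by
    intro h
    by_cases hq0 : q = 0
    · rw [hq0, map_zero, mul_zero, zero_sub, neg_eq_zero, FaithfulSMul.algebraMap_eq_zero_iff] at h
      rcases hpq with h' | h'
      · exact h' h
      · exact h' hq0
    · refine hyF ⟨p / q, ?_⟩
      rw [map_div₀, div_eq_iff (by rwa [Ne, FaithfulSMul.algebraMap_eq_zero_iff])]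
      exact (sub_eq_zero.1 h).symm
  have hum : jet D u m ∈ H 1 := by
    have hle : IntermediateField.adjoin F (jet D u '' Set.Iio m) ≤ H 1 :=
      IntermediateField.adjoin.mono _ _ _ Set.subset_union_left
    have hP1 := hle (evalD_sub_mem D u hdP hmP)
    have hQ1 := hle (evalD_sub_mem D u hdQ hmQ)
    have hy1 : y ∈ H 1 := hHy 1 0 one_pos
    have hrel : y * evalD F D u Q = evalD F D u P := div_mul_cancel₀ _ hQ0
    have h1 : jet D u m = ((evalD F D u P - algebraMap F E p * jet D u m) -
        y * (evalD F D u Q - algebraMap F E q * jet D u m)) /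
        (y * algebraMap F E q - algebraMap F E p) := by
      rw [eq_div_iff he]
      linear_combination hrel
    rw [h1]
    refine (H 1).div_mem ((H 1).sub_mem hP1 ((H 1).mul_mem hy1 hQ1)) ?_
    exact (H 1).sub_mem ((H 1).mul_mem hy1 ((H 1).algebraMap_mem _)) ((H 1).algebraMap_mem _)
  have hDH : ∀ b, ∀ z ∈ H b, D z ∈ H (b + 1) := by
    intro b z hz
    refine D_mem_of_mem_adjoin hD (SetLike.coe_subset_coe.2 (hHmono (Nat.le_succ b)) |>.trans'
      (IntermediateField.subset_adjoin F _)) ?_ hz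
    rintro _ (⟨i, hi, rfl⟩ | ⟨i, hi, rfl⟩)
    · rw [D_jet]
      rcases Nat.lt_or_ge (i + 1) m with h | h
      · exact hHu _ _ h
      · have : i + 1 = m := le_antisymm hi h
        rw [this]
        exact hHmono (by omega) hum
    · rw [D_jet]
      exact hHy _ _ (Nat.succ_lt_succ hi)
  have hum' : ∀ k, jet D u (m + k) ∈ H (k + 1) := by
    intro k
    induction k with
    | zero => exact hum
    | succ k ih =>
      have := hDH _ _ ih
      rwa [D_jet] at this
  rintro _ ⟨i, hi, rfl⟩
  rw [Set.mem_Iio] at hi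
  rcases Nat.lt_or_ge i m with h | h
  · exact hHu _ _ h
  · obtain ⟨k, rfl⟩ := Nat.exists_eq_add_of_le h
    exact hHmono (by omega) (hum' k)

end OneComponent

/-! ### From algebraic to rational dependence -/

section Descent

/-- The pair `(a, b)` is the value of a rational function `P / Q` at the points `U` and `V`, where
`Q` does not vanish at `V`. For `U` algebraically independent over `F` the value of `Q` at `U` is
then nonzero as well; the relation is stated without denominators. -/
def SpecPair (U V : ℕ → E) (a b : E) : Prop :=
  ∃ P Q : MvPolynomial ℕ F, aeval V Q ≠ 0 ∧ a * aeval U Q = aeval U P ∧ b * aeval V Q = aeval V P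

namespace SpecPair

variable {U V : ℕ → E} {a b a' b' : E}

lemma of_algebraMap (c : F) : SpecPair (F := F) U V (algebraMap F E c) (algebraMap F E c) :=
  ⟨C c, 1, by simp, by simp, by simp⟩

lemma of_var (k : ℕ) : SpecPair (F := F) U V (U k) (V k) :=
  ⟨X k, 1, by simp, by simp, by simp⟩

lemma add (h : SpecPair (F := F) U V a b) (h' : SpecPair (F := F) U V a' b') :
    SpecPair (F := F) U V (a + a') (b + b') := by
  obtain ⟨P, Q, h0, h1, h2⟩ := h
  obtain ⟨P', Q', h0', h1', h2'⟩ := h'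
  refine ⟨P * Q' + P' * Q, Q * Q', ?_, ?_, ?_⟩
  · rw [map_mul]; exact mul_ne_zero h0 h0'
  · simp only [map_mul, map_add]
    linear_combination (aeval U Q') * h1 + (aeval U Q) * h1'
  · simp only [map_mul, map_add]
    linear_combination (aeval V Q') * h2 + (aeval V Q) * h2'

lemma mul (h : SpecPair (F := F) U V a b) (h' : SpecPair (F := F) U V a' b') :
    SpecPair (F := F) U V (a * a') (b * b') := by
  obtain ⟨P, Q, h0, h1, h2⟩ := h
  obtain ⟨P', Q', h0', h1', h2'⟩ := h'
  refine ⟨P * P', Q * Q', ?_, ?_, ?_⟩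
  · rw [map_mul]; exact mul_ne_zero h0 h0'
  · simp only [map_mul]
    linear_combination (a' * aeval U Q') * h1 + aeval U P * h1'
  · simp only [map_mul]
    linear_combination (b' * aeval V Q') * h2 + aeval V P * h2'

lemma neg (h : SpecPair (F := F) U V a b) : SpecPair (F := F) U V (-a) (-b) := by
  have := (of_algebraMap (F := F) (U := U) (V := V) (-1)).mul h
  simpa using this

lemma sub (h : SpecPair (F := F) U V a b) (h' : SpecPair (F := F) U V a' b') :
    SpecPair (F := F) U V (a - a') (b - b') := by
  rw [sub_eq_add_neg, sub_eq_add_neg]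
  exact h.add h'.neg

lemma div {x y : E} (h' : SpecPair (F := F) U V a' b') (h : SpecPair (F := F) U V a b)
    (hb' : b' ≠ 0) (hx : x * a' = a) (hy : y * b' = b) : SpecPair (F := F) U V x y := by
  obtain ⟨P, Q, h0, h1, h2⟩ := h
  obtain ⟨P', Q', h0', h1', h2'⟩ := h'
  refine ⟨P * Q', P' * Q, ?_, ?_, ?_⟩
  · rw [map_mul, ← h2']; exact mul_ne_zero (mul_ne_zero hb' h0') h0
  · simp only [map_mul]
    subst hx
    linear_combination (aeval U Q') * h1 - x * (aeval U Q) * h1'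
  · simp only [map_mul]
    subst hy
    linear_combination (aeval V Q') * h2 - y * (aeval V Q) * h2'

lemma eq_zero (hU : AlgebraicIndependent F U) (h : SpecPair (F := F) U V 0 b) : b = 0 := by
  obtain ⟨P, Q, h0, h1, h2⟩ := h
  rw [zero_mul] at h1
  have hP : P = 0 := hU (by rw [← h1, map_zero])
  rw [hP, map_zero] at h2
  exact (mul_eq_zero.1 h2).resolve_right h0

/-- If the diagonal pairs `(s, s)`, `s ∈ S`, are values of rational functions, so are all diagonal
pairs over `F(S)`. -/
lemma diag_of_mem_adjoin {S : Set E} (hS : ∀ s ∈ S, SpecPair (F := F) U V s s) {k : E}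
    (hk : k ∈ IntermediateField.adjoin F S) : SpecPair (F := F) U V k k := by
  induction hk using IntermediateField.adjoin_induction with
  | mem x hx => exact hS x hx
  | algebraMap x => exact of_algebraMap x
  | add x y _ _ hx hy => exact hx.add hy
  | inv x _ hx =>
    by_cases h0 : x = 0
    · have := of_algebraMap (F := F) (U := U) (V := V) 0
      rw [map_zero] at this
      rwa [h0, inv_zero]
    · have h1 := of_algebraMap (F := F) (U := U) (V := V) 1
      rw [map_one] at h1
      exact hx.div h1 h0 (inv_mul_cancel₀ h0) (inv_mul_cancel₀ h0)
  | mul x y _ _ hx hy => exact hx.mul hy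

end SpecPair

/-- The `F`-span of `1, u, D u, D² u, …`. -/
def linSpan (F : Type*) {E : Type*} [Field F] [Field E] [Algebra F E] (D : Derivation ℤ E E)
    (u : E) : Submodule F E :=
  Submodule.span F (insert 1 (Set.range (jet D u)))

lemma evalD_mem_linSpan (D : Derivation ℤ E E) (u : E) {P : MvPolynomial ℕ F}
    (hP : P.totalDegree ≤ 1) : evalD F D u P ∈ linSpan F D u := by
  rw [P.as_sum, map_sum]
  refine Submodule.sum_mem _ fun d hd => ?_
  rw [evalD, aeval_monomial, ← Algebra.smul_def]
  refine Submodule.smul_mem _ _ (Submodule.subset_span ?_)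
  by_cases h : d = 0
  · left
    rw [h, Finsupp.prod_zero_index]
  · obtain ⟨v, hv⟩ := Finsupp.support_nonempty_iff.2 h
    right
    refine ⟨v, ?_⟩
    rw [eq_single_of_mem_support hP hd hv, Finsupp.prod_single_index (by simp), pow_one]
    rfl

variable {δF : Derivation ℤ F F} {D : Derivation ℤ E E}

lemma D_mem_linSpan (hD : ∀ a : F, D (algebraMap F E a) = algebraMap F E (δF a)) {u w : E}
    (hw : w ∈ linSpan F D u) : D w ∈ linSpan F D u := by
  induction hw using Submodule.span_induction with
  | mem x hx =>
    rcases hx with rfl | ⟨k, rfl⟩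
    · rw [Derivation.map_one_eq_zero]; exact Submodule.zero_mem _
    · rw [D_jet]; exact Submodule.subset_span (Or.inr ⟨k + 1, rfl⟩)
  | zero => rw [map_zero]; exact Submodule.zero_mem _
  | add x y _ _ hx hy => rw [map_add]; exact Submodule.add_mem _ hx hy
  | smul a x hx' hx =>
    rw [Algebra.smul_def, Derivation.leibniz, hD, smul_eq_mul, smul_eq_mul, mul_comm x,
      ← Algebra.smul_def, ← Algebra.smul_def]
    exact Submodule.add_mem _ (Submodule.smul_mem _ _ hx) (Submodule.smul_mem _ _ hx')

lemma iterate_D_mem_linSpan (hD : ∀ a : F, D (algebraMap F E a) = algebraMap F E (δF a)) {u w : E}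
    (hw : w ∈ linSpan F D u) (j : ℕ) : (⇑D)^[j] w ∈ linSpan F D u := by
  induction j with
  | zero => exact hw
  | succ j ih => rw [Function.iterate_succ_apply']; exact D_mem_linSpan hD ih

/-- The Leibniz formula in the form `D^j (x w) = x_j w + Σ_{i<j} x_i w_i`, with `w_i` linear
in `u`. -/
lemma iterate_D_mul_sub_mem (hD : ∀ a : F, D (algebraMap F E a) = algebraMap F E (δF a))
    {u x w : E} (hw : w ∈ linSpan F D u) (j : ℕ) :
    (⇑D)^[j] (x * w) - jet D x j * w ∈
      AddSubgroup.closure {z | ∃ i < j, ∃ w ∈ linSpan F D u, z = jet D x i * w} := by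
  induction j with
  | zero => simp [jet]
  | succ j ih =>
    have hDn : ∀ n ∈ AddSubgroup.closure {z | ∃ i < j, ∃ w ∈ linSpan F D u, z = jet D x i * w},
        D n ∈ AddSubgroup.closure {z | ∃ i < j + 1, ∃ w ∈ linSpan F D u, z = jet D x i * w} := by
      intro n hn
      induction hn using AddSubgroup.closure_induction with
      | mem z hz =>
        obtain ⟨i, hi, w, hw, rfl⟩ := hz
        rw [Derivation.leibniz, smul_eq_mul, smul_eq_mul, D_jet, mul_comm w]
        exact AddSubgroup.add_mem _
          (AddSubgroup.subset_closure ⟨i, by omega, D w, D_mem_linSpan hD hw, rfl⟩)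
          (AddSubgroup.subset_closure ⟨i + 1, by omega, w, hw, rfl⟩)
      | zero => rw [map_zero]; exact AddSubgroup.zero_mem _
      | add a b _ _ ha hb => rw [map_add]; exact AddSubgroup.add_mem _ ha hb
      | neg a _ ha => rw [map_neg]; exact AddSubgroup.neg_mem _ ha
    have h1 := AddSubgroup.add_mem _ (hDn _ ih)
      (AddSubgroup.subset_closure ⟨j, by omega, D w, D_mem_linSpan hD hw, rfl⟩)
    convert h1 using 1
    rw [map_sub, Derivation.leibniz, smul_eq_mul, smul_eq_mul, D_jet,
      Function.iterate_succ_apply']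
    ring

lemma specPair_of_mem_linSpan {K : IntermediateField F E} (π : E →ₗ[K] E) (hπ : π 1 = 1)
    {u w : E} (hw : w ∈ linSpan F D u) :
    SpecPair (F := F) (jet D u) (fun k => π (jet D u k)) w (π w) := by
  induction hw using Submodule.span_induction with
  | mem x hx =>
    rcases hx with rfl | ⟨k, rfl⟩
    · rw [hπ]
      have := SpecPair.of_algebraMap (F := F) (U := jet D u) (V := fun k => π (jet D u k)) 1
      rwa [map_one] at this
    · exact SpecPair.of_var (V := fun k => π (jet D u k)) k
  | zero =>
    have := SpecPair.of_algebraMap (F := F) (U := jet D u) (V := fun k => π (jet D u k)) 0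
    rw [map_zero] at this
    rwa [map_zero]
  | add x y _ _ hx hy => rw [map_add]; exact hx.add hy
  | smul a x _ hx =>
    rw [LinearMap.map_smul_of_tower, Algebra.smul_def, Algebra.smul_def]
    exact (SpecPair.of_algebraMap a).mul hx

/-- Let `x q = p` with `p`, `q` linear in `u`, and let `π` be linear over a field containing all
derivatives of `x`. Applying `π` to the derivatives of this equation shows that every `x_j` is
fixed by the specialization `u_k ↦ π u_k`. -/
lemma specPair_jet (hD : ∀ a : F, D (algebraMap F E a) = algebraMap F E (δF a))
    {K : IntermediateField F E} (π : E →ₗ[K] E) (hπ : π 1 = 1) {u x p q : E}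
    (hxK : ∀ j, jet D x j ∈ K) (hp : p ∈ linSpan F D u) (hq : q ∈ linSpan F D u)
    (hxq : x * q = p) (hq0 : π q ≠ 0) (j : ℕ) :
    SpecPair (F := F) (jet D u) (fun k => π (jet D u k)) (jet D x j) (jet D x j) := by
  have hmul : ∀ j z, π (jet D x j * z) = jet D x j * π z := fun j z =>
    π.map_smul (⟨jet D x j, hxK j⟩ : K) z
  induction j using Nat.strong_induction_on with
  | _ j ih =>
    have hn : ∀ n ∈ AddSubgroup.closure {z | ∃ i < j, ∃ w ∈ linSpan F D u, z = jet D x i * w},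
        SpecPair (F := F) (jet D u) (fun k => π (jet D u k)) n (π n) := by
      intro n hn
      induction hn using AddSubgroup.closure_induction with
      | mem z hz =>
        obtain ⟨i, hi, w, hw, rfl⟩ := hz
        rw [hmul]
        exact (ih i hi).mul (specPair_of_mem_linSpan π hπ hw)
      | zero => exact specPair_of_mem_linSpan π hπ (Submodule.zero_mem _)
      | add a b _ _ ha hb => rw [map_add]; exact ha.add hb
      | neg a _ ha => rw [map_neg]; exact ha.neg
    have h1 := iterate_D_mul_sub_mem hD (x := x) hq j
    rw [hxq] at h1
    refine (specPair_of_mem_linSpan π hπ hq).div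
      ((specPair_of_mem_linSpan π hπ (iterate_D_mem_linSpan hD hp j)).sub (hn _ h1)) hq0 ?_ ?_
    · ring
    · rw [← map_sub, ← hmul]
      congr 1
      ring

/-- For `u ∉ K` there is a `K`-linear functional on `E` with `1 ↦ 1` and `u ↦ 0`. -/
lemma exists_functional {K : IntermediateField F E} {u : E} (hu : u ∉ K) :
    ∃ φ : E →ₗ[K] K, φ 1 = 1 ∧ φ u = 0 := by
  have h1 : (1 : E) ∉ Submodule.span K {u} := by
    intro h
    obtain ⟨c, hc⟩ := Submodule.mem_span_singleton.1 h
    apply hu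
    have hcu : (c : E) * u = 1 := hc
    rw [eq_inv_of_mul_eq_one_right hcu]
    exact K.inv_mem c.2
  obtain ⟨f, hf1, hfu⟩ := Submodule.exists_le_ker_of_notMem h1
  refine ⟨(f 1)⁻¹ • f, ?_, ?_⟩
  · rw [LinearMap.smul_apply, smul_eq_mul, inv_mul_cancel₀ hf1]
  · rw [LinearMap.smul_apply, LinearMap.mem_ker.1 (hfu (Submodule.mem_span_singleton_self u)),
      smul_zero]

/-- If `η₁`, `η₂` are quotients of linear differential polynomials in `u` and `u` is algebraic over
`F⟨η₁, η₂⟩`, then `u` lies in `F⟨η₁, η₂⟩`. Otherwise take a linear functional `φ` as above and the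
`F⟨η₁, η₂⟩`-linear maps `π z = φ z + c (z - φ z)`: for almost all `c` the specialization
`u_k ↦ π u_k` fixes `F⟨η₁, η₂⟩` and sends `u` to `c u`, so the minimal polynomial of `u` has
infinitely many roots `c u`. -/
lemma mem_of_isAlgebraic [CharZero F]
    (hD : ∀ a : F, D (algebraMap F E a) = algebraMap F E (δF a)) {u x y p₁ q₁ p₂ q₂ : E}
    (hu : AlgebraicIndependent F (jet D u))
    (hp₁ : p₁ ∈ linSpan F D u) (hq₁ : q₁ ∈ linSpan F D u)
    (hp₂ : p₂ ∈ linSpan F D u) (hq₂ : q₂ ∈ linSpan F D u) (h₁ : q₁ ≠ 0) (h₂ : q₂ ≠ 0)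
    (hx : x * q₁ = p₁) (hy : y * q₂ = p₂)
    (halg : IsAlgebraic
      (IntermediateField.adjoin F (Set.range (jet D x) ∪ Set.range (jet D y))) u) :
    u ∈ IntermediateField.adjoin F (Set.range (jet D x) ∪ Set.range (jet D y)) := by
  set S := Set.range (jet D x) ∪ Set.range (jet D y) with hS
  set K := IntermediateField.adjoin F S with hK
  by_contra huK
  have : CharZero E := charZero_of_injective_algebraMap (algebraMap F E).injective
  have hu0 : u ≠ 0 := fun h => huK (h ▸ K.zero_mem)
  obtain ⟨φ, hφ1, hφu⟩ := exists_functional huK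
  let ι : E →ₗ[K] E := (Algebra.linearMap K E).comp φ
  let π : ℕ → E →ₗ[K] E := fun c => ι + c • (LinearMap.id - ι)
  have hπ : ∀ c z, π c z = ι z + c * (z - ι z) := fun c z => by
    simp [π, nsmul_eq_mul]
  have hι1 : ι 1 = 1 := by simp [ι, hφ1]
  have hιu : ι u = 0 := by simp [ι, hφu]
  have hπ1 : ∀ c, π c 1 = 1 := fun c => by rw [hπ, hι1]; ring
  have hπu : ∀ c, π c u = c * u := fun c => by rw [hπ, hιu]; ring
  -- `π c q` is affine in `c`; it equals `q ≠ 0` at `c = 1`, so it has at most one zero.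
  have hbad : ∀ q : E, q ≠ 0 → {c : ℕ | π c q = 0}.Finite := by
    intro q hq
    refine Set.Subsingleton.finite fun c hc c' hc' => ?_
    rw [Set.mem_ofPred_eq, hπ] at hc hc'
    have h3 : ((c : E) - c') * (q - ι q) = 0 := by linear_combination hc - hc'
    rcases mul_eq_zero.1 h3 with h | h
    · exact_mod_cast sub_eq_zero.1 h
    · rw [h] at hc
      exact absurd (by linear_combination h + hc) hq
  have hgood : ({c : ℕ | π c q₁ = 0} ∪ {c : ℕ | π c q₂ = 0})ᶜ.Infinite :=
    ((hbad _ h₁).union (hbad _ h₂)).infinite_compl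
  set f := minpoly K u with hf
  have hroot : ∀ c ∈ ({c : ℕ | π c q₁ = 0} ∪ {c : ℕ | π c q₂ = 0})ᶜ,
      Polynomial.aeval ((c : E) * u) f = 0 := by
    intro c hc
    have hc1 : π c q₁ ≠ 0 := fun h => hc (Or.inl h)
    have hc2 : π c q₂ ≠ 0 := fun h => hc (Or.inr h)
    have hdiag : ∀ k ∈ K, SpecPair (F := F) (jet D u) (fun k => π c (jet D u k)) k k := by
      intro k hk
      refine SpecPair.diag_of_mem_adjoin ?_ hk
      rintro _ (⟨j, rfl⟩ | ⟨j, rfl⟩)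
      · exact specPair_jet hD (π c) (hπ1 c)
          (fun j => IntermediateField.subset_adjoin F S (Or.inl ⟨j, rfl⟩)) hp₁ hq₁ hx hc1 j
      · exact specPair_jet hD (π c) (hπ1 c)
          (fun j => IntermediateField.subset_adjoin F S (Or.inr ⟨j, rfl⟩)) hp₂ hq₂ hy hc2 j
    -- `u` is the zeroth entry of `jet D u`.
    have huu : SpecPair (F := F) (jet D u) (fun k => π c (jet D u k)) u (c * u) := by
      rw [← hπu]
      exact SpecPair.of_var (V := fun k => π c (jet D u k)) 0
    have hpoly : ∀ g : Polynomial K, SpecPair (F := F) (jet D u) (fun k => π c (jet D u k))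
        (Polynomial.aeval u g) (Polynomial.aeval ((c : E) * u) g) := by
      intro g
      induction g using Polynomial.induction_on with
      | C a =>
        rw [Polynomial.aeval_C, Polynomial.aeval_C]
        exact hdiag _ a.2
      | add g h hg hh => rw [map_add, map_add]; exact hg.add hh
      | monomial n a ih =>
        rw [pow_succ, ← mul_assoc, map_mul _ (_ * _), map_mul _ (_ * _), Polynomial.aeval_X,
          Polynomial.aeval_X]
        exact ih.mul huu
    have := hpoly f
    rw [hf, minpoly.aeval] at this
    exact this.eq_zero hu
  have hf0 : f ≠ 0 := minpoly.ne_zero halg.isIntegral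
  have hmap : f.map (algebraMap K E) ≠ 0 :=
    (Polynomial.map_ne_zero_iff (algebraMap K E).injective).2 hf0
  refine hmap (Polynomial.eq_zero_of_infinite_isRoot _ ((hgood.image (f := fun c : ℕ => (c : E) * u)
    fun c _ c' _ h => ?_).mono ?_))
  · exact_mod_cast mul_right_cancel₀ hu0 h
  · rintro _ ⟨c, hc, rfl⟩
    have := hroot c hc
    rwa [Set.mem_ofPred_eq, Polynomial.IsRoot, Polynomial.eval_map_algebraMap]

end Descent

/-! ### Orders of the defining polynomial -/

lemma genDF_singleton (D : Derivation ℤ E E) (u : E) :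
    genDF F D {u} = IntermediateField.adjoin F (Set.range (jet D u)) := by
  rw [genDF]
  congr 1
  ext z
  simp [jet]

lemma genDF_pair (D : Derivation ℤ E E) (x y : E) :
    genDF F D {x, y} =
      IntermediateField.adjoin F (Set.range (jet D x) ∪ Set.range (jet D y)) := by
  rw [genDF]
  congr 1
  ext z
  simp [jet]

lemma self_mem_satSet
    (dxy : Derivation ℤ (MvPolynomial (Fin 2 × ℕ) F) (MvPolynomial (Fin 2 × ℕ) F))
    (A : MvPolynomial (Fin 2 × ℕ) F) : A ∈ satSet dxy A :=
  ⟨0, by rw [pow_zero, one_mul]; exact Ideal.subset_span ⟨0, rfl⟩⟩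

lemma vars_subset_box_iff {A : MvPolynomial (Fin 2 × ℕ) F} {a b : ℕ} :
    A.vars ⊆ box a b ↔ ordIdx 0 A < (a : WithBot ℕ) ∧ ordIdx 1 A < (b : WithBot ℕ) := by
  rw [ordIdx_lt_iff, ordIdx_lt_iff]
  constructor
  · intro h
    constructor <;> intro v hv hi <;> rcases mem_box.1 (h hv) with ⟨h1, h2⟩ | ⟨h1, h2⟩
    · exact h2
    · exact absurd (hi.symm.trans h1) (by decide)
    · exact absurd (h1.symm.trans hi) (by decide)
    · exact h2
  · rintro ⟨h0, h1⟩ v hv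
    rcases (by omega : v.1 = 0 ∨ v.1 = 1) with h | h
    · exact mem_box.2 (Or.inl ⟨h, h0 v hv h⟩)
    · exact mem_box.2 (Or.inr ⟨h, h1 v hv h⟩)

lemma exists_ordIdx_lt (i : Fin 2) (A : MvPolynomial (Fin 2 × ℕ) F) :
    ∃ b : ℕ, ordIdx i A < (b : WithBot ℕ) :=
  ⟨A.vars.sup Prod.snd + 1, ordIdx_lt_iff.2 fun _ hv _ =>
    Nat.lt_succ_of_le (Finset.le_sup (f := Prod.snd) hv)⟩

section Orders

variable {δF : Derivation ℤ F F} {D : Derivation ℤ E E}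
  {dxy : Derivation ℤ (MvPolynomial (Fin 2 × ℕ) F) (MvPolynomial (Fin 2 × ℕ) F)}
  {A : MvPolynomial (Fin 2 × ℕ) F} {u x y : E} {m₁ m₂ : ℕ}

/-- If the derivatives of `u` are algebraic over `F⟨x, y⟩`, then the defining polynomial `A` of the
curve has orders `m₂`, `m₁`. The rank bound of `le_eRk_prefix` shows that no relation has smaller
order in `x` or in `y`; a dimension count gives a relation of orders at most `m₂`, `m₁`, and `A`
divides it. -/
lemma ordIdx_eq_of_mem_closure [CharZero F]
    (hD : ∀ a : F, D (algebraMap F E a) = algebraMap F E (δF a))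
    (hdxyC : ∀ a : F, dxy (C a) = C (δF a))
    (hdxyX : ∀ (i : Fin 2) (k : ℕ), dxy (X (i, k)) = X (i, k + 1))
    (hA : Irreducible A) (hsat : {B | evalD2 F D x y B = 0} = satSet dxy A)
    (hu : AlgebraicIndependent F (jet D u))
    (hx : ∀ j, jet D x j ∈ (matroid F E).closure (jet D u '' Set.Iio (m₁ + 1 + j)))
    (hy : ∀ j, jet D y j ∈ (matroid F E).closure (jet D u '' Set.Iio (m₂ + 1 + j)))
    (hUx : ∀ b, jet D u '' Set.Iio (m₁ + b) ⊆
      (matroid F E).closure (jet D u '' Set.Iio m₁ ∪ jet D x '' Set.Iio b))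
    (hUy : ∀ b, jet D u '' Set.Iio (m₂ + b) ⊆
      (matroid F E).closure (jet D u '' Set.Iio m₂ ∪ jet D y '' Set.Iio b))
    (hxy : Set.range (jet D u) ⊆
      (matroid F E).closure (Set.range (jet D x) ∪ Set.range (jet D y))) :
    ordIdx 1 A = (m₁ : WithBot ℕ) ∧ ordIdx 0 A = (m₂ : WithBot ℕ) := by
  have hA0 : evalD2 F D x y A = 0 := by
    have : A ∈ {B | evalD2 F D x y B = 0} := hsat ▸ self_mem_satSet dxy A
    exact this
  have hge0 : (m₂ : WithBot ℕ) ≤ ordIdx 0 A := by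
    by_contra! h
    obtain ⟨b, hb⟩ := exists_ordIdx_lt 1 A
    exact hA.ne_zero ((eRk_box_iff D x y m₂ b).2 (le_eRk_prefix hD hu hUy hxy b) A
      (vars_subset_box_iff.2 ⟨h, hb⟩) hA0)
  have hge1 : (m₁ : WithBot ℕ) ≤ ordIdx 1 A := by
    by_contra! h
    obtain ⟨b, hb⟩ := exists_ordIdx_lt 0 A
    rw [Set.union_comm] at hxy
    have h1 := le_eRk_prefix hD hu hUx hxy b
    rw [Set.union_comm, add_comm] at h1
    exact hA.ne_zero ((eRk_box_iff D x y b m₁).2 h1 A (vars_subset_box_iff.2 ⟨hb, h⟩) hA0)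
  obtain ⟨B, hBv, hB0, hB⟩ : ∃ B : MvPolynomial (Fin 2 × ℕ) F,
      B.vars ⊆ box (m₂ + 1) (m₁ + 1) ∧ evalD2 F D x y B = 0 ∧ B ≠ 0 := by
    by_contra! hno
    have h1 := (eRk_box_iff D x y (m₂ + 1) (m₁ + 1)).1 hno
    have hsub : jet D x '' Set.Iio (m₂ + 1) ∪ jet D y '' Set.Iio (m₁ + 1) ⊆
        (matroid F E).closure (jet D u '' Set.Iio (m₁ + m₂ + 1)) := by
      rintro _ (⟨j, hj, rfl⟩ | ⟨j, hj, rfl⟩) <;> rw [Set.mem_Iio] at hj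
      · exact (matroid F E).closure_subset_closure
          (Set.image_mono (Set.Iio_subset_Iio (by omega))) (hx j)
      · exact (matroid F E).closure_subset_closure
          (Set.image_mono (Set.Iio_subset_Iio (by omega))) (hy j)
    have h2 := h1.trans ((matroid F E).eRk_mono hsub)
    rw [(matroid F E).eRk_closure_eq, eRk_prefix hu, Nat.cast_le] at h2
    omega
  obtain ⟨hBx, hBy⟩ := vars_subset_box_iff.1 hBv
  have hBx' : ordIdx 0 B ≤ (m₂ : WithBot ℕ) :=
    ordIdx_le_iff.2 fun v hv hi => Nat.le_of_lt_succ (ordIdx_lt_iff.1 hBx v hv hi)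
  have hBy' : ordIdx 1 B ≤ (m₁ : WithBot ℕ) :=
    ordIdx_le_iff.2 fun v hv hi => Nat.le_of_lt_succ (ordIdx_lt_iff.1 hBy v hv hi)
  obtain ⟨s, hs⟩ : ∃ s : ℕ, ordIdx 0 A = (s : WithBot ℕ) := by
    obtain ⟨s, hs, -⟩ := WithBot.coe_le_iff.1 hge0
    exact ⟨s, hs⟩
  have hBsat : B ∈ satSet dxy A := hsat ▸ hB0
  have hdvd : A ∣ B :=
    dvd_of_mem_satSet hdxyC hdxyX hA hs hBsat (hBx'.trans (hge0.trans hs.le))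
  exact ⟨le_antisymm (ordIdx_le_of_dvd hB hdvd hBy') hge1,
    le_antisymm (ordIdx_le_of_dvd hB hdvd hBx') hge0⟩

/-- If `A` has order `m₂` in `x`, every relation of smaller order in `x` is divisible by `A`, hence
zero; so `x_0, …, x_{m₂-1}, y_0, …, y_{m₁}` are algebraically independent and `u` is algebraic over
`F⟨x, y⟩`. -/
lemma mem_closure_of_ordIdx_eq [CharZero F]
    (hdxyC : ∀ a : F, dxy (C a) = C (δF a))
    (hdxyX : ∀ (i : Fin 2) (k : ℕ), dxy (X (i, k)) = X (i, k + 1))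
    (hA : Irreducible A) (hsat : {B | evalD2 F D x y B = 0} = satSet dxy A)
    (hu : AlgebraicIndependent F (jet D u))
    (hx : ∀ j, jet D x j ∈ (matroid F E).closure (jet D u '' Set.Iio (m₁ + 1 + j)))
    (hy : ∀ j, jet D y j ∈ (matroid F E).closure (jet D u '' Set.Iio (m₂ + 1 + j)))
    (hord : ordIdx 0 A = (m₂ : WithBot ℕ)) :
    u ∈ (matroid F E).closure (Set.range (jet D x) ∪ Set.range (jet D y)) := by
  refine mem_closure_of_le_eRk hu hx hy ((eRk_box_iff D x y m₂ (m₁ + 1)).1 fun B hBv hB0 => ?_)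
  by_contra hB
  obtain ⟨hBx, -⟩ := vars_subset_box_iff.1 hBv
  have hBsat : B ∈ satSet dxy A := hsat ▸ hB0
  have hdvd : A ∣ B := dvd_of_mem_satSet hdxyC hdxyX hA hord hBsat hBx.le
  have hlt : ordIdx 0 A < (m₂ : WithBot ℕ) := ordIdx_lt_iff.2 fun v hv =>
    ordIdx_lt_iff.1 hBx v (vars_subset_of_dvd hB hdvd hv)
  exact hlt.ne hord

end Orders

end

/-- a LINEAR differential rational parametrization of `(C, A)` is proper
iff `m₁ = ord_y A` and `m₂ = ord_x A`. -/
theorem linear_param_proper_iff_orders [CharZero F]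
    (δF : Derivation ℤ F F) (D : Derivation ℤ E E)
    (hD : ∀ a : F, D (algebraMap F E a) = algebraMap F E (δF a))
    (dxy : Derivation ℤ (MvPolynomial (Fin 2 × ℕ) F) (MvPolynomial (Fin 2 × ℕ) F))
    (hdxyC : ∀ a : F, dxy (C a) = C (δF a))
    (hdxyX : ∀ (i : Fin 2) (k : ℕ), dxy (X (i, k)) = X (i, k + 1))
    (A : MvPolynomial (Fin 2 × ℕ) F) (hA : Irreducible A)
    (u : E) (P₁ Q₁ P₂ Q₂ : MvPolynomial ℕ F)
    (hd₁ : P₁.totalDegree ≤ 1) (hd₂ : Q₁.totalDegree ≤ 1)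
    (hd₃ : P₂.totalDegree ≤ 1) (hd₄ : Q₂.totalDegree ≤ 1)
    (hpar : IsParam F D dxy A u P₁ Q₁ P₂ Q₂)
    (m₁ m₂ : ℕ) (hm₁ : max (ordU P₁) (ordU Q₁) = (m₁ : WithBot ℕ))
    (hm₂ : max (ordU P₂) (ordU Q₂) = (m₂ : WithBot ℕ)) :
    genDF F D {evalD F D u P₁ / evalD F D u Q₁, evalD F D u P₂ / evalD F D u Q₂}
        = genDF F D {u}
      ↔ (ordIdx 1 A = (m₁ : WithBot ℕ) ∧ ordIdx 0 A = (m₂ : WithBot ℕ)) := by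
  obtain ⟨hu, -, hQ₁, hPQ₁, -, hQ₂, hPQ₂, -, hsat⟩ := hpar
  have hQ₁0 : evalD F D u Q₁ ≠ 0 := fun h => hQ₁ (evalD_injective hu (by rw [h, map_zero]))
  have hQ₂0 : evalD F D u Q₂ ≠ 0 := fun h => hQ₂ (evalD_injective hu (by rw [h, map_zero]))
  have hxu := jet_mem_adjoin_prefix (u := u) hD hm₁
  have hyu := jet_mem_adjoin_prefix (u := u) hD hm₂
  have hUx := u_mem_adjoin_prefix hD hu hd₁ hd₂ hQ₁ hPQ₁ hm₁
  have hUy := u_mem_adjoin_prefix hD hu hd₃ hd₄ hQ₂ hPQ₂ hm₂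
  have hx : evalD F D u P₁ / evalD F D u Q₁ * evalD F D u Q₁ = evalD F D u P₁ :=
    div_mul_cancel₀ _ hQ₁0
  have hy : evalD F D u P₂ / evalD F D u Q₂ * evalD F D u Q₂ = evalD F D u P₂ :=
    div_mul_cancel₀ _ hQ₂0
  set x := evalD F D u P₁ / evalD F D u Q₁
  set y := evalD F D u P₂ / evalD F D u Q₂
  rw [genDF_pair, genDF_singleton]
  constructor
  · intro hproper
    refine ordIdx_eq_of_mem_closure hD hdxyC hdxyX hA hsat hu
      (fun j => adjoin_subset_closure _ (hxu j)) (fun j => adjoin_subset_closure _ (hyu j))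
      (fun b => (hUx b).trans (adjoin_subset_closure _))
      (fun b => (hUy b).trans (adjoin_subset_closure _)) ?_
    refine Set.Subset.trans ?_ (adjoin_subset_closure _)
    rw [hproper]
    exact IntermediateField.subset_adjoin _ _
  · rintro ⟨-, hord⟩
    have hucl := mem_closure_of_ordIdx_eq hdxyC hdxyX hA hsat hu
      (fun j => adjoin_subset_closure _ (hxu j)) (fun j => adjoin_subset_closure _ (hyu j)) hord
    have huK := mem_of_isAlgebraic hD hu (evalD_mem_linSpan D u hd₁) (evalD_mem_linSpan D u hd₂)
      (evalD_mem_linSpan D u hd₃) (evalD_mem_linSpan D u hd₄) hQ₁0 hQ₂0 hx hy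
      (mem_closure_iff.1 hucl)
    refine le_antisymm ?_ ?_
    · rw [IntermediateField.adjoin_le_iff]
      rintro _ (⟨j, rfl⟩ | ⟨j, rfl⟩)
      · exact IntermediateField.adjoin.mono _ _ _ (Set.image_subset_range _ _) (hxu j)
      · exact IntermediateField.adjoin.mono _ _ _ (Set.image_subset_range _ _) (hyu j)
    · rw [IntermediateField.adjoin_le_iff]
      rintro _ ⟨j, rfl⟩
      induction j with
      | zero => exact huK
      | succ j ih =>
        rw [← D_jet]
        refine D_mem_of_mem_adjoin hD (IntermediateField.subset_adjoin _ _) ?_ ih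
        rintro _ (⟨i, rfl⟩ | ⟨i, rfl⟩) <;> rw [D_jet]
        · exact IntermediateField.subset_adjoin _ _ (Or.inl ⟨i + 1, rfl⟩)
        · exact IntermediateField.subset_adjoin _ _ (Or.inr ⟨i + 1, rfl⟩)

end DiffCurve
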